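/- arXiv:cs/0602012 — 8 statements merged into one kernel-verified Lean document; each statement's English description precedes it below -/
import Mathlib

section
/- Let p be a prime, let g : ℤ_p → ℤ_p be a compatible map, and let c ∈ ℤ_p be a unit (i.e., c is not divisible by p). Then the map z ↦ c + z + p·(g(z+1) − g(z)) is compatible and ergodic, and for every d ∈ ℤ_p the map z ↦ d + c·z + p·g(z) is compatible and measure-preserving. -/
namespace Paper

/-- A sequence is purely periodic with period length `t`. -/
def PurePeriodic {α : Type*} (s : ℕ → α) (t : ℕ) : Prop :=
  ∀ i, s (i + t) = s i

/-- `t` is the length of the shortest period of the sequence `s`. -/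
def ShortestPeriod {α : Type*} (s : ℕ → α) (t : ℕ) : Prop :=
  1 ≤ t ∧ PurePeriodic s t ∧ ∀ t', 1 ≤ t' → PurePeriodic s t' → t ≤ t'

/-- A map `f : ℤ_[p] → ℤ_[p]` is compatible if `x ≡ y (mod p^n)` implies
`f x ≡ f y (mod p^n)` for all `n ≥ 1`. -/
def Compatible (p : ℕ) [Fact p.Prime] (f : ℤ_[p] → ℤ_[p]) : Prop :=
  ∀ n : ℕ, 1 ≤ n → ∀ x y : ℤ_[p],
    PadicInt.toZModPow n x = PadicInt.toZModPow n y →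
    PadicInt.toZModPow n (f x) = PadicInt.toZModPow n (f y)

/-- A map `f : ℤ_[p] → ℤ_[p]` is measure-preserving if the induced map modulo `p^n`
is bijective for every `n ≥ 1`. -/
def MeasurePreserving (p : ℕ) [Fact p.Prime] (f : ℤ_[p] → ℤ_[p]) : Prop :=
  ∀ n : ℕ, 1 ≤ n → ∃ fn : ZMod (p ^ n) → ZMod (p ^ n),
    (∀ x, fn (PadicInt.toZModPow n x) = PadicInt.toZModPow n (f x)) ∧
    Function.Bijective fn

/-- A map `f : ℤ_[p] → ℤ_[p]` is ergodic if the induced map modulo `p^n` is a permutation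
consisting of a single cycle of length `p^n` (i.e. it is bijective and iteration of it
reaches every point from every point), for every `n ≥ 1`. -/
def Ergodic (p : ℕ) [Fact p.Prime] (f : ℤ_[p] → ℤ_[p]) : Prop :=
  ∀ n : ℕ, 1 ≤ n → ∃ fn : ZMod (p ^ n) → ZMod (p ^ n),
    (∀ x, fn (PadicInt.toZModPow n x) = PadicInt.toZModPow n (f x)) ∧
    Function.Bijective fn ∧ ∀ a b : ZMod (p ^ n), ∃ k : ℕ, fn^[k] a = b

/-- `digit j x` is the `j`-th binary digit of the 2-adic integer `x`, as an element of `ZMod 2`. -/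
noncomputable def digit (j : ℕ) (x : ℤ_[2]) : ZMod 2 :=
  (((PadicInt.toZModPow (j + 1) x).val / 2 ^ j) % 2 : ℕ)

/-- `digitZ j x` is the `j`-th binary digit of the canonical representative of `x : ZMod N`. -/
def digitZ {N : ℕ} (j : ℕ) (x : ZMod N) : ZMod 2 :=
  ((x.val / 2 ^ j) % 2 : ℕ)

/-- The conditions of Theorem `thm:WP` on the family `g 0, …, g (m-1)`:
(1) the sequence `(g (i % m) 0 mod 2)` is purely periodic with shortest period length `m`;
(2) `∑ i < m, g i 0 ≡ 1 (mod 2)`;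
(3) for every `k ≥ 1`, `∑ j < m, ∑ z < 2^k, g j z ≡ 2^k (mod 2^(k+1))`. -/
def WP (m : ℕ) (g : ℕ → ℤ_[2] → ℤ_[2]) : Prop :=
  ShortestPeriod (fun i => PadicInt.toZModPow 1 (g (i % m) 0)) m ∧
  PadicInt.toZModPow 1 (∑ i ∈ Finset.range m, g i 0) = 1 ∧
  ∀ k : ℕ, 1 ≤ k →
    PadicInt.toZModPow (k + 1)
        (∑ j ∈ Finset.range m, ∑ z ∈ Finset.range (2 ^ k), g j (z : ℤ_[2])) =
      (2 ^ k : ZMod (2 ^ (k + 1)))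

/-- `L` is the length of some LFSR over `𝔽₂` producing the binary sequence `u`:
there are `c₁, …, c_L` with `u (i+L) = c₁ * u (i+L-1) + ⋯ + c_L * u i` for all `i`. -/
def IsLFSR (u : ℕ → ZMod 2) (L : ℕ) : Prop :=
  ∃ c : Fin L → ZMod 2, ∀ i : ℕ, u (i + L) = ∑ t : Fin L, c t * u (i + L - 1 - t.val)

/-- The linear complexity over `𝔽₂` of a binary sequence: the least length of an LFSR
producing it. -/
noncomputable def linComplexity (u : ℕ → ZMod 2) : ℕ := sInf {L | IsLFSR u L}

/-- A map `f : ℕ → ℕ` is compatible if `u ≡ w (mod 2^r)` implies `f u ≡ f w (mod 2^r)`. -/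
def NatCompatible (f : ℕ → ℕ) : Prop :=
  ∀ r : ℕ, 1 ≤ r → ∀ u w : ℕ, u % 2 ^ r = w % 2 ^ r → f u % 2 ^ r = f w % 2 ^ r

/-- A map `f : ℕ → ℕ` is ergodic if the induced map on `ZMod (2^n)` is a permutation
consisting of a single cycle of length `2^n`, for every `n ≥ 1`. -/
def NatErgodic (f : ℕ → ℕ) : Prop :=
  ∀ n : ℕ, 1 ≤ n → ∃ fn : ZMod (2 ^ n) → ZMod (2 ^ n),
    (∀ u : ℕ, fn (u : ZMod (2 ^ n)) = (f u : ZMod (2 ^ n))) ∧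
    Function.Bijective fn ∧ ∀ a b : ZMod (2 ^ n), ∃ k : ℕ, fn^[k] a = b

end Paper

namespace Paper

lemma tz_iff {p : ℕ} [Fact p.Prime] (n : ℕ) (x y : ℤ_[p]) :
    PadicInt.toZModPow n x = PadicInt.toZModPow n y ↔ (p : ℤ_[p]) ^ n ∣ x - y := by
  rw [← sub_eq_zero, ← map_sub, ← RingHom.mem_ker, PadicInt.ker_toZModPow,
    Ideal.mem_span_singleton]

lemma compat_dvd {p : ℕ} [Fact p.Prime] {g : ℤ_[p] → ℤ_[p]} (hg : Compatible p g)
    (n : ℕ) (x y : ℤ_[p]) (h : (p : ℤ_[p]) ^ n ∣ x - y) : (p : ℤ_[p]) ^ n ∣ g x - g y := by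
  rcases Nat.eq_zero_or_pos n with rfl | hn
  · simp
  · exact (tz_iff n _ _).1 (hg n hn x y ((tz_iff n _ _).2 h))

lemma compat_of_dvd {p : ℕ} [Fact p.Prime] {g : ℤ_[p] → ℤ_[p]}
    (h : ∀ n x y, (p : ℤ_[p]) ^ n ∣ x - y → (p : ℤ_[p]) ^ n ∣ g x - g y) : Compatible p g :=
  fun n _ x y hxy => (tz_iff n _ _).2 (h n x y ((tz_iff n _ _).1 hxy))

/-- The map induced on the residues. -/
noncomputable def ind (p : ℕ) [Fact p.Prime] (f : ℤ_[p] → ℤ_[p]) (n : ℕ)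
    (a : ZMod (p ^ n)) : ZMod (p ^ n) :=
  PadicInt.toZModPow n (f ((a.val : ℕ) : ℤ_[p]))

lemma tz_val {p : ℕ} [Fact p.Prime] (n : ℕ) (a : ZMod (p ^ n)) :
    PadicInt.toZModPow n ((a.val : ℕ) : ℤ_[p]) = a := by
  haveI : NeZero (p ^ n) := ⟨pow_ne_zero _ (Fact.out : p.Prime).ne_zero⟩
  rw [map_natCast, ZMod.natCast_zmod_val]

lemma ind_tz {p : ℕ} [Fact p.Prime] {f : ℤ_[p] → ℤ_[p]} (hf : Compatible p f) (n : ℕ)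
    (x : ℤ_[p]) : ind p f n (PadicInt.toZModPow n x) = PadicInt.toZModPow n (f x) := by
  unfold ind
  rw [tz_iff]
  apply compat_dvd hf
  rw [← tz_iff, tz_val]

lemma ind_iter {p : ℕ} [Fact p.Prime] {f : ℤ_[p] → ℤ_[p]} (hf : Compatible p f) (n k : ℕ)
    (x : ℤ_[p]) :
    (ind p f n)^[k] (PadicInt.toZModPow n x) = PadicInt.toZModPow n (f^[k] x) := by
  induction k with
  | zero => rfl
  | succ k ih => rw [Function.iterate_succ_apply', ih, ind_tz hf, Function.iterate_succ_apply']

lemma iter_sum {p : ℕ} [Fact p.Prime] (c : ℤ_[p]) (h : ℤ_[p] → ℤ_[p])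
    (f : ℤ_[p] → ℤ_[p]) (hf : ∀ z, f z = c + z + p * h z) (k : ℕ) (z : ℤ_[p]) :
    f^[k] z = z + k * c + p * ∑ i ∈ Finset.range k, h (f^[i] z) := by
  induction k with
  | zero => simp
  | succ k ih =>
    rw [Function.iterate_succ_apply', hf, Finset.sum_range_succ]
    nth_rewrite 1 [ih]
    push_cast
    ring

lemma sum_dvd {p : ℕ} [Fact p.Prime] {g : ℤ_[p] → ℤ_[p]} (hg : Compatible p g)
    (f : ℤ_[p] → ℤ_[p]) (n : ℕ) (z : ℤ_[p])
    (ht : ∀ y : ℤ_[p], ∃ k < p ^ n, (p : ℤ_[p]) ^ n ∣ f^[k] z - y) :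
    (p : ℤ_[p]) ^ n ∣ ∑ i ∈ Finset.range (p ^ n), (g (f^[i] z + 1) - g (f^[i] z)) := by
  haveI : NeZero (p ^ n) := ⟨pow_ne_zero _ (Fact.out : p.Prime).ne_zero⟩
  have hs : Function.Surjective
      (fun i : Fin (p ^ n) => PadicInt.toZModPow n (f^[(i : ℕ)] z)) := by
    intro a
    obtain ⟨k, hk, hd⟩ := ht ((a.val : ℕ) : ℤ_[p])
    refine ⟨⟨k, hk⟩, ?_⟩
    rw [← tz_iff, tz_val] at hd
    exact hd
  have hb := (Fintype.bijective_iff_surjective_and_card _).2 ⟨hs, by simp [ZMod.card]⟩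
  have := (tz_iff n (∑ i ∈ Finset.range (p ^ n), (g (f^[i] z + 1) - g (f^[i] z))) 0).1
  rw [sub_zero] at this
  apply this
  rw [map_zero, map_sum, Finset.sum_range]
  have e : ∀ i : Fin (p ^ n), PadicInt.toZModPow n (g (f^[(i : ℕ)] z + 1) - g (f^[(i : ℕ)] z)) =
      (fun a => ind p g n (a + 1) - ind p g n a) (PadicInt.toZModPow n (f^[(i : ℕ)] z)) := by
    intro i
    simp only
    rw [map_sub, ← ind_tz hg, ← ind_tz hg, map_add, map_one]
  rw [Finset.sum_congr rfl (fun i _ => e i),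
    hb.sum_comp (fun a => ind p g n (a + 1) - ind p g n a), Finset.sum_sub_distrib, sub_eq_zero]
  exact Equiv.sum_comp (Equiv.addRight (1 : ZMod (p ^ n))) (ind p g n)

lemma trans_main {p : ℕ} [Fact p.Prime] {g : ℤ_[p] → ℤ_[p]} (hg : Compatible p g)
    (c : ℤ_[p]) (hc : IsUnit c) (f : ℤ_[p] → ℤ_[p])
    (hf : ∀ z, f z = c + z + p * (g (z + 1) - g z)) (n : ℕ) :
    ∀ x y : ℤ_[p], ∃ k < p ^ n, (p : ℤ_[p]) ^ n ∣ f^[k] x - y := by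
  induction n with
  | zero => intro x y; exact ⟨0, by simp, by simp⟩
  | succ n ih =>
    have step : ∀ z, (p : ℤ_[p]) ^ (n + 1) ∣ f^[p ^ n] z - (z + p ^ n * c) := by
      intro z
      rw [iter_sum c (fun z => g (z + 1) - g z) f hf]
      obtain ⟨q, hq⟩ := sum_dvd hg f n z (ih z)
      rw [hq]
      exact ⟨q, by push_cast; ring⟩
    have steps : ∀ j z, (p : ℤ_[p]) ^ (n + 1) ∣ f^[p ^ n * j] z - (z + j * (p ^ n * c)) := by
      intro j
      induction j with
      | zero => intro z; simp
      | succ j ihj =>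
        intro z
        rw [Nat.mul_succ, Nat.add_comm (p ^ n * j), Function.iterate_add_apply]
        have := dvd_add (step (f^[p ^ n * j] z)) (ihj z)
        convert this using 1
        push_cast
        ring
    intro x y
    obtain ⟨k, hk, t, ht⟩ := ih x y
    obtain ⟨u, rfl⟩ := hc
    have hp : 0 < p := (Fact.out : p.Prime).pos
    haveI : NeZero (p ^ 1) := ⟨pow_ne_zero _ (Fact.out : p.Prime).ne_zero⟩
    let s : ℤ_[p] := -(t * ((u⁻¹ : ℤ_[p]ˣ) : ℤ_[p]))
    have hj := tz_val (p := p) 1 (PadicInt.toZModPow 1 s)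
    have hjlt : (PadicInt.toZModPow 1 s).val < p ^ 1 := ZMod.val_lt _
    generalize (PadicInt.toZModPow 1 s).val = j at hj hjlt
    rw [tz_iff, pow_one] at hj
    rw [pow_one] at hjlt
    obtain ⟨w, hw⟩ := hj
    refine ⟨p ^ n * j + k, ?_, ?_⟩
    · calc p ^ n * j + k < p ^ n * j + p ^ n := by omega
        _ = p ^ n * (j + 1) := by ring
        _ ≤ p ^ n * p := Nat.mul_le_mul_left _ hjlt
        _ = p ^ (n + 1) := by ring
    · rw [Function.iterate_add_apply]
      have h2 : (p : ℤ_[p]) ^ (n + 1) ∣ (f^[k] x + j * (p ^ n * (u : ℤ_[p]))) - y := by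
        have hu : ((u⁻¹ : ℤ_[p]ˣ) : ℤ_[p]) * u = 1 := by simp
        refine ⟨w * u, ?_⟩
        have h3 : (j : ℤ_[p]) = p * w - t * ((u⁻¹ : ℤ_[p]ˣ) : ℤ_[p]) := by
          rw [← hw]; simp only [s]; ring
        rw [h3]
        linear_combination ht - t * (p : ℤ_[p]) ^ n * hu
      have := dvd_add (steps j (f^[k] x)) h2
      convert this using 1
      ring

end Paper

/-- for a prime `p`, a compatible `g : ℤ_p → ℤ_p` and a unit `c ∈ ℤ_p`,
the map `z ↦ c + z + p·(g (z+1) − g z)` is compatible and ergodic, and for every `d`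
the map `z ↦ d + c·z + p·g z` is compatible and measure-preserving. -/
theorem statement2 (p : ℕ) [Fact p.Prime] (g : ℤ_[p] → ℤ_[p])
    (hg : Paper.Compatible p g) (c : ℤ_[p]) (hc : IsUnit c) :
    (Paper.Compatible p (fun z => c + z + (p : ℤ_[p]) * (g (z + 1) - g z)) ∧
      Paper.Ergodic p (fun z => c + z + (p : ℤ_[p]) * (g (z + 1) - g z))) ∧
    ∀ d : ℤ_[p],
      Paper.Compatible p (fun z => d + c * z + (p : ℤ_[p]) * g z) ∧
      Paper.MeasurePreserving p (fun z => d + c * z + (p : ℤ_[p]) * g z) := by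
  constructor
  · have hC : Paper.Compatible p (fun z => c + z + (p : ℤ_[p]) * (g (z + 1) - g z)) := by
      apply Paper.compat_of_dvd
      intro n x y h
      have h1 := Paper.compat_dvd hg n x y h
      have h2 := Paper.compat_dvd hg n (x + 1) (y + 1) (by simpa using h)
      have := dvd_add h (Dvd.dvd.mul_left (dvd_sub h2 h1) (p : ℤ_[p]))
      convert this using 1
      ring
    refine ⟨hC, fun n _ => ⟨Paper.ind p _ n, Paper.ind_tz hC n, ?_⟩⟩
    have ht : ∀ a b : ZMod (p ^ n), ∃ k : ℕ, (Paper.ind p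
        (fun z => c + z + (p : ℤ_[p]) * (g (z + 1) - g z)) n)^[k] a = b := by
      intro a b
      obtain ⟨k, -, hk⟩ := Paper.trans_main hg c hc _ (fun z => rfl) n
        ((a.val : ℕ) : ℤ_[p]) ((b.val : ℕ) : ℤ_[p])
      refine ⟨k, ?_⟩
      rw [← Paper.tz_iff, ← Paper.ind_iter hC, Paper.tz_val, Paper.tz_val] at hk
      exact hk
    refine ⟨?_, ht⟩
    haveI : NeZero (p ^ n) := ⟨pow_ne_zero _ (Fact.out : p.Prime).ne_zero⟩
    apply Function.Surjective.bijective_of_finite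
    intro b
    obtain ⟨k, hk⟩ := ht (Paper.ind p _ n b) b
    rw [← Function.iterate_succ_apply, Function.iterate_succ_apply'] at hk
    exact ⟨_, hk⟩
  · intro d
    have hC : Paper.Compatible p (fun z => d + c * z + (p : ℤ_[p]) * g z) := by
      apply Paper.compat_of_dvd
      intro n x y h
      have h1 := Paper.compat_dvd hg n x y h
      have := dvd_add (Dvd.dvd.mul_left h c) (Dvd.dvd.mul_left h1 (p : ℤ_[p]))
      convert this using 1
      ring
    refine ⟨hC, fun n _ => ⟨Paper.ind p _ n, Paper.ind_tz hC n, ?_⟩⟩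
    haveI : NeZero (p ^ n) := ⟨pow_ne_zero _ (Fact.out : p.Prime).ne_zero⟩
    apply Function.Injective.bijective_of_finite
    intro a b hab
    rw [← Paper.tz_val n a, ← Paper.tz_val n b] at hab ⊢
    rw [Paper.ind_tz hC, Paper.ind_tz hC, Paper.tz_iff] at hab
    rw [Paper.tz_iff]
    generalize ((a.val : ℕ) : ℤ_[p]) = x at hab ⊢
    generalize ((b.val : ℕ) : ℤ_[p]) = y at hab ⊢
    have key : ∀ k ≤ n, (p : ℤ_[p]) ^ k ∣ x - y := by
      intro k
      induction k with
      | zero => simp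
      | succ k ih =>
        intro hk
        have h1 := mul_dvd_mul_left (p : ℤ_[p]) (Paper.compat_dvd hg k x y (ih (by omega)))
        rw [← pow_succ'] at h1
        have h2 := dvd_sub ((pow_dvd_pow (p : ℤ_[p]) hk).trans hab) h1
        rw [← hc.dvd_mul_left (a := (p : ℤ_[p]) ^ (k + 1))]
        convert h2 using 1
        ring
    exact key n le_rfl
end

section
/- Every compatible and ergodic map f : ℤ₂ → ℤ₂ can be represented as f(x) = 1 + x + 2·(g(x+1) − g(x)) for a suitable compatible map g : ℤ₂ → ℤ₂, and every compatible and measure-preserving map f : ℤ₂ → ℤ₂ can be represented as f(x) = d + x + 2·g(x) for a suitable d ∈ ℤ₂ and a suitable compatible map g : ℤ₂ → ℤ₂. -/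
namespace Paper

lemma tzp_iff (n : ℕ) (x y : ℤ_[2]) :
    PadicInt.toZModPow n x = PadicInt.toZModPow n y ↔ (2 : ℤ_[2]) ^ n ∣ x - y := by
  rw [← sub_eq_zero, ← map_sub, ← RingHom.mem_ker, PadicInt.ker_toZModPow,
    Ideal.mem_span_singleton]
  norm_num

lemma compat_iff (f : ℤ_[2] → ℤ_[2]) :
    Compatible 2 f ↔ ∀ (n : ℕ) (x y : ℤ_[2]), (2 : ℤ_[2]) ^ n ∣ x - y → (2 : ℤ_[2]) ^ n ∣ f x - f y := by
  constructor
  · intro h n x y hxy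
    rcases Nat.eq_zero_or_pos n with rfl | hn
    · simp
    · exact (tzp_iff n _ _).1 (h n hn x y ((tzp_iff n _ _).2 hxy))
  · intro h n _ x y hxy
    exact (tzp_iff n _ _).2 (h n x y ((tzp_iff n _ _).1 hxy))

lemma inj_of_mp {f : ℤ_[2] → ℤ_[2]} (h : MeasurePreserving 2 f) (n : ℕ) (x y : ℤ_[2])
    (hxy : (2 : ℤ_[2]) ^ n ∣ f x - f y) : (2 : ℤ_[2]) ^ n ∣ x - y := by
  rcases Nat.eq_zero_or_pos n with rfl | hn
  · simp
  · obtain ⟨fn, h1, h2⟩ := h n hn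
    rw [← tzp_iff] at hxy ⊢
    rw [← h1, ← h1] at hxy
    exact h2.1 hxy

lemma odd_sub (a : ℤ_[2]) (h : ¬ (2 : ℤ_[2]) ∣ a) : (2 : ℤ_[2]) ∣ a - 1 := by
  have key : ∀ z : ZMod (2 ^ 1), z = 0 ∨ z = 1 := by decide
  rcases key (PadicInt.toZModPow 1 a) with h0 | h0
  · rw [← map_zero (PadicInt.toZModPow (p := 2) 1), tzp_iff] at h0
    exact absurd (by simpa using h0) h
  · rw [← map_one (PadicInt.toZModPow (p := 2) 1), tzp_iff] at h0
    simpa using h0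

lemma half_step (n : ℕ) (a : ℤ_[2]) (h : (2 : ℤ_[2]) ^ n ∣ a) (h' : ¬ (2 : ℤ_[2]) ^ (n + 1) ∣ a) :
    (2 : ℤ_[2]) ^ (n + 1) ∣ a - 2 ^ n := by
  obtain ⟨c, rfl⟩ := h
  have : ¬ (2 : ℤ_[2]) ∣ c := fun hc => h' (by rw [pow_succ]; exact mul_dvd_mul_left _ hc)
  have h2 := mul_dvd_mul_left ((2 : ℤ_[2]) ^ n) (odd_sub c this)
  rw [pow_succ]
  convert h2 using 1
  ring

lemma diff_compat {f : ℤ_[2] → ℤ_[2]} (hc : Compatible 2 f) (h : MeasurePreserving 2 f) (n : ℕ)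
    (x y : ℤ_[2]) (hxy : (2 : ℤ_[2]) ^ n ∣ x - y) :
    (2 : ℤ_[2]) ^ (n + 1) ∣ (f x - x) - (f y - y) := by
  rw [compat_iff] at hc
  by_cases h1 : (2 : ℤ_[2]) ^ (n + 1) ∣ x - y
  · have := dvd_sub (hc _ _ _ h1) h1
    convert this using 1
    ring
  · have h2 : ¬ (2 : ℤ_[2]) ^ (n + 1) ∣ f x - f y := fun hh => h1 (inj_of_mp h _ _ _ hh)
    have := dvd_sub (half_step n _ (hc _ _ _ hxy) h2) (half_step n _ hxy h1)
    convert this using 1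
    ring

/-- common half: `f x = d + x + 2 h x` with `h` compatible as soon as `2 ∣ f 0 - d`. -/
lemma exists_half {f : ℤ_[2] → ℤ_[2]} (hc : Compatible 2 f) (h : MeasurePreserving 2 f)
    (d : ℤ_[2]) (hd : (2 : ℤ_[2]) ∣ f 0 - d) :
    ∃ g : ℤ_[2] → ℤ_[2], Compatible 2 g ∧ ∀ x, f x = d + x + 2 * g x := by
  have h1 : ∀ x, ∃ y, f x = d + x + 2 * y := by
    intro x
    have h2 := diff_compat hc h 0 x 0 (by simp)
    simp only [zero_add, pow_one] at h2
    obtain ⟨c, hc⟩ := dvd_add h2 hd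
    exact ⟨c, by linear_combination hc⟩
  choose g hg using h1
  refine ⟨g, ?_, hg⟩
  rw [compat_iff]
  intro n x y hxy
  have h2 := diff_compat hc h n x y hxy
  rw [hg x, hg y] at h2
  have h3 : (2 : ℤ_[2]) * 2 ^ n ∣ 2 * (g x - g y) := by
    rw [pow_succ, mul_comm] at h2
    convert h2 using 1
    ring
  exact (mul_dvd_mul_iff_left two_ne_zero).1 h3

lemma cycle_lemma {α : Type*} [Fintype α] [DecidableEq α] (φ : α → α) (hφ : Function.Injective φ)
    (a : α) (ht : ∀ b, ∃ k : ℕ, φ^[k] a = b) :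
    Function.minimalPeriod φ a = Fintype.card α ∧
    Set.InjOn (fun j => φ^[j] a) (Finset.range (Fintype.card α)) ∧
    (Finset.range (Fintype.card α)).image (fun j => φ^[j] a) = Finset.univ := by
  have hp : a ∈ Function.periodicPts φ := hφ.mem_periodicPts a
  have hpos := Function.minimalPeriod_pos_of_mem_periodicPts hp
  have hinj : Set.InjOn (fun j => φ^[j] a) (Finset.range (Function.minimalPeriod φ a)) := by
    have := Function.iterate_injOn_Iio_minimalPeriod (f := φ) (x := a)
    intro i hi j hj hij
    exact this (by simpa using hi) (by simpa using hj) hij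
  have hsurj : (Finset.range (Function.minimalPeriod φ a)).image (fun j => φ^[j] a) = Finset.univ := by
    ext b
    simp only [Finset.mem_image, Finset.mem_range, Finset.mem_univ, iff_true]
    obtain ⟨k, hk⟩ := ht b
    exact ⟨k % Function.minimalPeriod φ a, Nat.mod_lt _ hpos, by
      rw [Function.iterate_mod_minimalPeriod_eq, hk]⟩
  have hcard : Function.minimalPeriod φ a = Fintype.card α := by
    have := Finset.card_image_of_injOn hinj
    rw [hsurj, Finset.card_range, Finset.card_univ] at this
    exact this.symm
  rw [hcard] at hinj hsurj
  exact ⟨hcard, hinj, hsurj⟩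

lemma Ergodic.mp {f : ℤ_[2] → ℤ_[2]} (h : Ergodic 2 f) : MeasurePreserving 2 f := by
  intro n hn
  obtain ⟨fn, h1, h2, _⟩ := h n hn
  exact ⟨fn, h1, h2⟩

lemma iter_sem {f : ℤ_[2] → ℤ_[2]} {n : ℕ} {fn : ZMod (2 ^ n) → ZMod (2 ^ n)}
    (h : ∀ x, fn (PadicInt.toZModPow n x) = PadicInt.toZModPow n (f x)) (j : ℕ) :
    PadicInt.toZModPow n (f^[j] 0) = fn^[j] 0 := by
  induction j with
  | zero => simp
  | succ j ih => rw [Function.iterate_succ_apply', Function.iterate_succ_apply', ← ih, h]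

lemma orbit_iff {f : ℤ_[2] → ℤ_[2]} (h : Ergodic 2 f) (n : ℕ) (hn : 1 ≤ n) (j : ℕ) :
    (2 : ℤ_[2]) ^ n ∣ f^[j] 0 ↔ 2 ^ n ∣ j := by
  obtain ⟨fn, h1, h2, h3⟩ := h n hn
  have hc := (cycle_lemma fn h2.1 0 (h3 0)).1
  rw [ZMod.card] at hc
  rw [← hc, ← Function.isPeriodicPt_iff_minimalPeriod_dvd, Function.IsPeriodicPt,
    Function.IsFixedPt, ← iter_sem h1, ← map_zero (PadicInt.toZModPow (p := 2) n), tzp_iff, sub_zero]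

lemma sum_diff {f : ℤ_[2] → ℤ_[2]} (hc : Compatible 2 f) (h : Ergodic 2 f) (n : ℕ) (hn : 1 ≤ n) :
    (2 : ℤ_[2]) ^ (n + 1) ∣ ∑ i ∈ Finset.range (2 ^ n), (f i - i) - 2 ^ n := by
  obtain ⟨fn, h1, h2, h3⟩ := h n hn
  obtain ⟨-, hinj, himg⟩ := cycle_lemma fn h2.1 0 (h3 0)
  rw [ZMod.card] at hinj himg
  set F : ZMod (2 ^ n) → ZMod (2 ^ (n + 1)) :=
    fun a => PadicInt.toZModPow (n + 1) (f (a.val : ℤ_[2]) - (a.val : ℤ_[2])) with hF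
  have hFx : ∀ x, F (PadicInt.toZModPow n x) = PadicInt.toZModPow (n + 1) (f x - x) := by
    intro x
    rw [hF]
    dsimp only
    rw [tzp_iff]
    apply diff_compat hc h.mp
    rw [← tzp_iff]
    simp
  have e1 : ∑ a, F a = ∑ j ∈ Finset.range (2 ^ n), PadicInt.toZModPow (n + 1) (f (f^[j] 0) - f^[j] 0) := by
    rw [← himg, Finset.sum_image hinj]
    refine Finset.sum_congr rfl fun j _ => ?_
    rw [← hFx, iter_sem h1]
  have e2 : ∑ a, F a = ∑ i ∈ Finset.range (2 ^ n), PadicInt.toZModPow (n + 1) (f (i : ℤ_[2]) - (i : ℤ_[2])) := by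
    symm
    refine Finset.sum_bij' (fun i _ => (i : ZMod (2 ^ n))) (fun a _ => a.val) ?_ ?_ ?_ ?_ ?_
    · simp
    · intro a _; simpa using ZMod.val_lt a
    · intro i hi; exact ZMod.val_cast_of_lt (by simpa using hi)
    · intro a _; simp
    · intro i hi; rw [← hFx]; simp
  have e3 : ∑ j ∈ Finset.range (2 ^ n), (f (f^[j] 0) - f^[j] 0) = f^[2 ^ n] 0 := by
    have := Finset.sum_range_sub (fun j => f^[j] 0) (2 ^ n)
    simpa only [Function.iterate_succ_apply', Function.iterate_zero_apply, sub_zero] using this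
  rw [e1, ← map_sum, ← map_sum, e3, tzp_iff] at e2
  have h4 := half_step n (f^[2 ^ n] 0) ((orbit_iff h n hn _).2 dvd_rfl) (by
    rw [orbit_iff h (n + 1) (by omega)]
    intro hd
    have := Nat.le_of_dvd (by positivity) hd
    rw [pow_succ] at this
    have : 0 < 2 ^ n := by positivity
    omega)
  have := dvd_sub h4 e2
  convert this using 1
  ring

lemma gauss_id (m : ℕ) (f h : ℤ_[2] → ℤ_[2]) (hh : ∀ x, f x = 1 + x + 2 * h x) :
    ∑ i ∈ Finset.range m, (f i - i) = m + 2 * ∑ i ∈ Finset.range m, h i := by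
  rw [Finset.mul_sum]
  have : ∀ i : ℕ, f i - i = 1 + 2 * h i := fun i => by rw [hh]; ring
  simp [this, Finset.sum_add_distrib]

/-- partial sums that vanish mod `2^n` on full blocks give a compatible antidifference. -/
lemma antidiff (h : ℤ_[2] → ℤ_[2]) (hc : Compatible 2 h)
    (hs : ∀ n, (2 : ℤ_[2]) ^ n ∣ ∑ i ∈ Finset.range (2 ^ n), h i) :
    ∃ g : ℤ_[2] → ℤ_[2], Compatible 2 g ∧ ∀ x, g (x + 1) - g x = h x := by
  rw [compat_iff] at hc
  set G : ℕ → ℤ_[2] := fun m => ∑ i ∈ Finset.range m, h i with hG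
  have G1 : ∀ m, G (m + 1) = G m + h m := fun m => Finset.sum_range_succ _ _
  -- periodicity
  have P1 : ∀ n m, (2 : ℤ_[2]) ^ n ∣ G (m + 2 ^ n) - G m := by
    intro n m
    induction m with
    | zero => simpa [hG] using hs n
    | succ m ih =>
      have : m + 1 + 2 ^ n = (m + 2 ^ n) + 1 := by ring
      rw [this, G1, G1]
      have h2 := hc n ((m + 2 ^ n : ℕ) : ℤ_[2]) m (by push_cast; simp)
      convert dvd_add ih h2 using 1
      ring
  have P2 : ∀ n m k, (2 : ℤ_[2]) ^ n ∣ G (m + 2 ^ n * k) - G m := by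
    intro n m k
    induction k with
    | zero => simp
    | succ k ih =>
      convert dvd_add ih (P1 n (m + 2 ^ n * k)) using 1
      rw [mul_add, mul_one, add_assoc]
      ring
  have P3 : ∀ (n a b : ℕ), (2 : ℤ_[2]) ^ n ∣ (a : ℤ_[2]) - b → (2 : ℤ_[2]) ^ n ∣ G a - G b := by
    intro n a b hab
    rw [← tzp_iff, map_natCast, map_natCast, ZMod.natCast_eq_natCast_iff'] at hab
    have ha := P2 n (a % 2 ^ n) (a / 2 ^ n)
    have hb := P2 n (b % 2 ^ n) (b / 2 ^ n)
    rw [Nat.mod_add_div] at ha hb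
    rw [hab] at ha
    convert dvd_sub ha hb using 1
    ring
  have A : ∀ (x : ℤ_[2]) n, (2 : ℤ_[2]) ^ n ∣ x - x.appr n := by
    intro x n
    have := PadicInt.appr_spec n x
    rw [Ideal.mem_span_singleton] at this
    simpa using this
  have L : ∀ x : ℤ_[2], ∃ y, ∀ n, (2 : ℤ_[2]) ^ n ∣ G (x.appr n) - y := by
    intro x
    have hmem : ∀ n (z : ℤ_[2]), z ∈ (IsLocalRing.maximalIdeal ℤ_[2] ^ n • ⊤ : Submodule ℤ_[2] ℤ_[2])
        ↔ (2 : ℤ_[2]) ^ n ∣ z := by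
      intro n z
      rw [smul_eq_mul, Ideal.mul_top, PadicInt.maximalIdeal_eq_span_p, Ideal.span_singleton_pow,
        Ideal.mem_span_singleton]
      norm_num
    obtain ⟨y, hy⟩ := (inferInstance : IsPrecomplete (IsLocalRing.maximalIdeal ℤ_[2]) ℤ_[2]).prec
      (f := fun n => G (x.appr n)) (by
        intro m n hmn
        rw [SModEq.sub_mem, hmem]
        apply P3
        have := dvd_sub ((pow_dvd_pow _ hmn).trans (A x n)) (A x m)
        convert this using 1
        ring)
    refine ⟨y, fun n => ?_⟩
    have := hy n
    rwa [SModEq.sub_mem, hmem] at this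
  choose g hg using L
  have K : ∀ n x (a : ℕ), (2 : ℤ_[2]) ^ n ∣ x - a → (2 : ℤ_[2]) ^ n ∣ g x - G a := by
    intro n x a hxa
    have h1 := P3 n a (x.appr n) (by
      convert dvd_sub (A x n) hxa using 1
      ring)
    rw [← dvd_neg]
    convert dvd_add h1 (hg x n) using 1
    ring
  refine ⟨g, ?_, ?_⟩
  · rw [compat_iff]
    intro n x y hxy
    have h1 := K n x (y.appr n) (by
      convert dvd_add hxy (A y n) using 1
      ring)
    have h2 := K n y _ (A y n)
    convert dvd_sub h1 h2 using 1
    ring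
  · intro x
    rw [← PadicInt.ext_of_toZModPow]
    intro n
    rw [tzp_iff]
    have h1 := K n (x + 1) (x.appr n + 1) (by
      convert A x n using 1
      push_cast
      ring)
    have h2 := K n x _ (A x n)
    have h3 := hc n _ _ (A x n)
    rw [G1] at h1
    convert dvd_sub (dvd_sub h1 h2) h3 using 1
    ring

end Paper

/-- every compatible ergodic `f : ℤ₂ → ℤ₂` has the form
`f x = 1 + x + 2·(g (x+1) − g x)` for some compatible `g`, and every compatible
measure-preserving `f` has the form `f x = d + x + 2·g x` for some `d ∈ ℤ₂` and
compatible `g`. -/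
theorem statement3 (f : ℤ_[2] → ℤ_[2]) :
    (Paper.Compatible 2 f ∧ Paper.Ergodic 2 f →
      ∃ g : ℤ_[2] → ℤ_[2], Paper.Compatible 2 g ∧
        ∀ x, f x = 1 + x + 2 * (g (x + 1) - g x)) ∧
    (Paper.Compatible 2 f ∧ Paper.MeasurePreserving 2 f →
      ∃ (d : ℤ_[2]) (g : ℤ_[2] → ℤ_[2]), Paper.Compatible 2 g ∧
        ∀ x, f x = d + x + 2 * g x) := by
  refine ⟨?_, ?_⟩
  · rintro ⟨hc, he⟩
    have h0 : (2 : ℤ_[2]) ∣ f 0 - 1 := by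
      apply Paper.odd_sub
      have := Paper.orbit_iff he 1 le_rfl 1
      simp only [pow_one, Function.iterate_one] at this
      rw [this]
      norm_num
    obtain ⟨h, hh, hf⟩ := Paper.exists_half hc he.mp 1 h0
    obtain ⟨g, hg, hgh⟩ := Paper.antidiff h hh (by
      intro n
      rcases Nat.eq_zero_or_pos n with rfl | hn
      · simp
      · have h1 := Paper.sum_diff hc he n hn
        rw [Paper.gauss_id _ f h hf, pow_succ, mul_comm] at h1
        push_cast at h1
        rw [add_sub_cancel_left] at h1
        exact (mul_dvd_mul_iff_left two_ne_zero).1 h1)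
    exact ⟨g, hg, fun x => by rw [hgh, hf]⟩
  · rintro ⟨hc, hm⟩
    obtain ⟨g, hg⟩ := Paper.exists_half hc hm (f 0) (by simp)
    exact ⟨f 0, g, hg⟩
end

section
/- A map T : ℤ₂ → ℤ₂ is compatible and measure-preserving if and only if for every i ≥ 0 there exists a Boolean function φ_i : {0,1}^i → ℤ/2 such that for all x ∈ ℤ₂, δ_i(T(x)) = δ_i(x) + φ_i(δ₀(x),…,δ_{i−1}(x)) in ℤ/2. -/
theorem aux_toZModPow_eq_iff (x y : ℤ_[2]) (n : ℕ) :
    PadicInt.toZModPow n x = PadicInt.toZModPow n y ↔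
      ∀ j < n, Paper.digit j x = Paper.digit j y := by
  induction n with
  | zero =>
    refine ⟨fun _ j hj => absurd hj (Nat.not_lt_zero j), fun _ => ?_⟩
    have : Subsingleton (ZMod (2 ^ 0)) := by
      rw [pow_zero]; infer_instance
    exact Subsingleton.elim _ _
  | succ n ih =>
    have key : ∀ z : ℤ_[2], (PadicInt.toZModPow n z).val
        = (PadicInt.toZModPow (n + 1) z).val % 2 ^ n := by
      intro z
      rw [← PadicInt.cast_toZModPow n (n + 1) (Nat.le_succ n) z, ZMod.cast_eq_val,
        ZMod.val_natCast]
    have hdig : ∀ z : ℤ_[2], (Paper.digit n z).val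
        = (PadicInt.toZModPow (n + 1) z).val / 2 ^ n := by
      intro z
      have hlt := ZMod.val_lt (PadicInt.toZModPow (n + 1) z)
      have h2 : (PadicInt.toZModPow (n + 1) z).val / 2 ^ n < 2 := by
        rw [Nat.div_lt_iff_lt_mul (by positivity)]
        calc _ < 2 ^ (n + 1) := hlt
          _ = _ := by ring
      unfold Paper.digit
      rw [ZMod.val_natCast, Nat.mod_mod, Nat.mod_eq_of_lt h2]
    constructor
    · intro h j hj
      rcases Nat.lt_succ_iff_lt_or_eq.mp hj with hj | rfl
      · refine ih.mp (ZMod.val_injective _ ?_) j hj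
        rw [key, key, h]
      · apply ZMod.val_injective
        rw [hdig, hdig, h]
    · intro h
      have h1 := ih.mpr (fun j hj => h j (Nat.lt_succ_of_lt hj))
      have h2 := congrArg ZMod.val (h n (Nat.lt_succ_self n))
      have h3 := congrArg ZMod.val h1
      rw [hdig, hdig] at h2
      rw [key, key] at h3
      apply ZMod.val_injective
      rw [← Nat.div_add_mod (PadicInt.toZModPow (n + 1) x).val (2 ^ n), h2, h3,
        Nat.div_add_mod]

theorem aux_zmod_two : ∀ a b c d : ZMod 2, a ≠ b → c ≠ d → c - a = d - b := by decide

/-- `T : ℤ₂ → ℤ₂` is compatible and measure-preserving iff for every `i`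
there is a Boolean function `φ_i` of `i` variables such that
`δ_i (T x) = δ_i x + φ_i (δ₀ x, …, δ_{i-1} x)` for all `x`. -/
theorem statement4 (T : ℤ_[2] → ℤ_[2]) :
    (Paper.Compatible 2 T ∧ Paper.MeasurePreserving 2 T) ↔
      ∀ i : ℕ, ∃ φ : (Fin i → ZMod 2) → ZMod 2,
        ∀ x : ℤ_[2],
          Paper.digit i (T x) = Paper.digit i x + φ (fun j => Paper.digit j.val x) := by
  constructor
  · rintro ⟨hc, hm⟩ i
    have key : ∀ x y : ℤ_[2], (∀ j < i, Paper.digit j x = Paper.digit j y) →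
        Paper.digit i (T x) - Paper.digit i x = Paper.digit i (T y) - Paper.digit i y := by
      intro x y h
      by_cases hi : Paper.digit i x = Paper.digit i y
      · have h1 : ∀ j < i + 1, Paper.digit j x = Paper.digit j y := by
          intro j hj
          rcases Nat.lt_succ_iff_lt_or_eq.mp hj with hj | rfl
          · exact h j hj
          · exact hi
        have h2 := hc (i + 1) (by omega) x y ((aux_toZModPow_eq_iff x y _).mpr h1)
        rw [hi, (aux_toZModPow_eq_iff _ _ _).mp h2 i (Nat.lt_succ_self i)]
      · refine aux_zmod_two _ _ _ _ hi fun hT => hi ?_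
        have h1 : ∀ j < i + 1, Paper.digit j (T x) = Paper.digit j (T y) := by
          intro j hj
          rcases Nat.lt_succ_iff_lt_or_eq.mp hj with hj | rfl
          · have h2 := hc i (by omega) x y ((aux_toZModPow_eq_iff x y _).mpr h)
            exact (aux_toZModPow_eq_iff _ _ _).mp h2 j hj
          · exact hT
        obtain ⟨fn, hfn, hbij⟩ := hm (i + 1) (by omega)
        have h2 := (aux_toZModPow_eq_iff _ _ _).mpr h1
        rw [← hfn, ← hfn] at h2
        exact (aux_toZModPow_eq_iff _ _ _).mp (hbij.1 h2) i (Nat.lt_succ_self i)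
    classical
    refine ⟨fun d => if h : ∃ x : ℤ_[2], (fun j : Fin i => Paper.digit j.val x) = d then
      Paper.digit i (T h.choose) - Paper.digit i h.choose else 0, fun x => ?_⟩
    have hex : ∃ y : ℤ_[2], (fun j : Fin i => Paper.digit j.val y) =
      (fun j : Fin i => Paper.digit j.val x) := ⟨x, rfl⟩
    beta_reduce
    rw [dif_pos hex, key hex.choose x fun j hj => congrFun hex.choose_spec ⟨j, hj⟩]
    ring
  · intro H
    have hc : ∀ n : ℕ, ∀ x y : ℤ_[2], PadicInt.toZModPow n x = PadicInt.toZModPow n y →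
        PadicInt.toZModPow n (T x) = PadicInt.toZModPow n (T y) := by
      intro n x y h
      rw [aux_toZModPow_eq_iff] at h ⊢
      intro j hj
      obtain ⟨φ, hφ⟩ := H j
      rw [hφ, hφ, h j hj]
      congr 2
      funext k
      exact h k (k.2.trans hj)
    have hinj : ∀ n : ℕ, ∀ x y : ℤ_[2], PadicInt.toZModPow n (T x) = PadicInt.toZModPow n (T y) →
        PadicInt.toZModPow n x = PadicInt.toZModPow n y := by
      intro n x y h
      rw [aux_toZModPow_eq_iff] at h ⊢
      intro j
      induction j using Nat.strong_induction_on with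
      | _ j ih =>
        intro hj
        obtain ⟨φ, hφ⟩ := H j
        have h1 := h j hj
        have h2 : (fun k : Fin j => Paper.digit k.val x) = fun k : Fin j => Paper.digit k.val y :=
          funext fun k => ih k k.2 (k.2.trans hj)
        rw [hφ, hφ, h2] at h1
        exact add_right_cancel h1
    refine ⟨fun n _ => hc n, fun n _ => ?_⟩
    have hs : ∀ a : ZMod (2 ^ n), PadicInt.toZModPow n ((a.val : ℕ) : ℤ_[2]) = a := by
      intro a
      rw [map_natCast, ZMod.natCast_zmod_val]
    refine ⟨fun a => PadicInt.toZModPow n (T ((a.val : ℕ) : ℤ_[2])),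
      fun x => hc n _ _ (hs _), ?_⟩
    apply Finite.injective_iff_bijective.mp
    intro a b hab
    have := hinj n _ _ hab
    rwa [hs, hs] at this
end

section
/- A map T : ℤ₂ → ℤ₂ is compatible and ergodic if and only if for every i ≥ 0 there exists a Boolean function φ_i : {0,1}^i → ℤ/2 of odd weight (i.e., φ_i takes the value 1 at an odd number of points of {0,1}^i) such that for all x ∈ ℤ₂, δ_i(T(x)) = δ_i(x) + φ_i(δ₀(x),…,δ_{i−1}(x)) in ℤ/2. -/
namespace Aux5

open Function

lemma period_sum {α : Type*} [Fintype α] (f : α → α)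
    (hf : ∀ a b : α, ∃ k : ℕ, f^[k] a = b) (φ : α → ZMod 2) (a : α) :
    ∑ i ∈ Finset.range (minimalPeriod f a), φ (f^[i] a) = ∑ b, φ b := by
  have hper : a ∈ periodicPts f := by
    obtain ⟨k, hk⟩ := hf (f a) a
    exact ⟨k + 1, Nat.succ_pos k, hk⟩
  have hp := minimalPeriod_pos_of_mem_periodicPts hper
  refine Finset.sum_bij (fun i _ => f^[i] a) (fun _ _ => Finset.mem_univ _) ?_ ?_ (fun _ _ => rfl)
  · intro i hi j hj h
    exact iterate_injOn_Iio_minimalPeriod (by simpa using hi) (by simpa using hj) h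
  · intro b _
    obtain ⟨k, hk⟩ := hf a b
    refine ⟨k % minimalPeriod f a, by simpa using Nat.mod_lt _ hp, ?_⟩
    rw [← hk]
    exact iterate_mod_minimalPeriod_eq

lemma skew {α β : Type*} [Fintype α] (f : α → α) (F : β → β) (π : β → α) (d : β → ZMod 2)
    (φ : α → ZMod 2) (hπ : ∀ x, π (F x) = f (π x)) (hd : ∀ x, d (F x) = d x + φ (π x))
    (inj : ∀ x y, π x = π y → d x = d y → x = y)
    (surj : ∀ a c, ∃ x, π x = a ∧ d x = c) [Nonempty α]
    (hf : ∀ a b : α, ∃ k : ℕ, f^[k] a = b) :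
    (∀ x y : β, ∃ k : ℕ, F^[k] x = y) ↔ ∑ a, φ a = 1 := by
  have hπk : ∀ k x, π (F^[k] x) = f^[k] (π x) := by
    intro k
    induction k with
    | zero => simp
    | succ k ih => intro x; rw [iterate_succ_apply', iterate_succ_apply', hπ, ih]
  have hdk : ∀ k x, d (F^[k] x) = d x + ∑ i ∈ Finset.range k, φ (f^[i] (π x)) := by
    intro k
    induction k with
    | zero => simp
    | succ k ih =>
      intro x
      rw [iterate_succ_apply', hd, ih, hπk, Finset.sum_range_succ, add_assoc]
  constructor
  · intro h
    by_contra hS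
    have hS0 : ∑ a, φ a = 0 := by
      generalize ∑ a, φ a = s at hS
      revert s; decide
    obtain ⟨a⟩ := (inferInstance : Nonempty α)
    obtain ⟨x, hx, -⟩ := surj a 0
    obtain ⟨y, hy, hyd⟩ := surj a (d x + 1)
    obtain ⟨k, hk⟩ := h x y
    have hP : IsPeriodicPt F (minimalPeriod f (π x)) x := by
      apply inj
      · rw [hπk]; exact iterate_minimalPeriod
      · rw [hdk, period_sum f hf, hS0, add_zero]
    have hdvd : minimalPeriod f (π x) ∣ k := by
      apply IsPeriodicPt.minimalPeriod_dvd
      change f^[k] (π x) = π x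
      rw [← hπk, hk, hy, hx]
    have : F^[k] x = x := hP.trans_dvd hdvd
    rw [← hk, this] at hyd
    simp at hyd
  · intro hS x y
    obtain ⟨k, hk⟩ := hf (π x) (π y)
    by_cases hc : d (F^[k] x) = d y
    · exact ⟨k, inj _ _ (by rw [hπk, hk]) hc⟩
    · refine ⟨minimalPeriod f (π y) + k, ?_⟩
      have e : π (F^[k] x) = π y := by rw [hπk, hk]
      rw [iterate_add_apply]
      apply inj
      · rw [hπk, e]; exact iterate_minimalPeriod
      · rw [hdk, e, period_sum f hf, hS]
        generalize d (F^[k] x) = u at hc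
        generalize d y = w at hc
        revert u w; decide

lemma odd_iff {α : Type*} [Fintype α] (φ : α → ZMod 2) :
    Odd ((Finset.univ.filter (fun v => φ v = 1)).card) ↔ ∑ a, φ a = 1 := by
  rw [← ZMod.natCast_eq_one_iff_odd, Finset.card_filter, Nat.cast_sum]
  have : ∀ a, ((if φ a = 1 then 1 else 0 : ℕ) : ZMod 2) = φ a := by
    intro a
    generalize φ a = s
    revert s; decide
  simp only [this]

/-- digit vector of a residue -/
def dz (n : ℕ) (a : ZMod (2 ^ n)) : Fin n → ZMod 2 :=
  fun j => ((a.val / 2 ^ j.val % 2 : ℕ) : ZMod 2)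

/-- digit vector of a 2-adic integer -/
noncomputable def D (n : ℕ) (x : ℤ_[2]) : Fin n → ZMod 2 := fun j => Paper.digit j.val x

lemma dz_toZMod (n : ℕ) (x : ℤ_[2]) : dz n (PadicInt.toZModPow n x) = D n x := by
  funext j
  have h := PadicInt.cast_toZModPow (p := 2) (j.val + 1) n j.isLt x
  simp only [dz, D, Paper.digit]
  rw [← h, ← ZMod.natCast_val, ZMod.val_natCast]
  congr 1
  rw [pow_succ, Nat.mod_mul_right_div_self, Nat.mod_mod]

lemma dz_inj (n : ℕ) : Function.Injective (dz n) := by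
  intro a b h
  apply ZMod.val_injective
  apply Nat.eq_of_testBit_eq
  intro i
  by_cases hi : i < n
  · have := congrFun h ⟨i, hi⟩
    simp only [dz] at this
    rw [ZMod.natCast_eq_natCast_iff'] at this
    rw [Nat.testBit_eq_decide_div_mod_eq, Nat.testBit_eq_decide_div_mod_eq]
    simp only [Nat.mod_mod] at this
    rw [this]
  · have hle : 2 ^ n ≤ 2 ^ i := Nat.pow_le_pow_right (by norm_num) (by omega)
    rw [Nat.testBit_lt_two_pow ((ZMod.val_lt a).trans_le hle),
      Nat.testBit_lt_two_pow ((ZMod.val_lt b).trans_le hle)]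

lemma dz_bij (n : ℕ) : Function.Bijective (dz n) := by
  rw [Fintype.bijective_iff_injective_and_card]
  refine ⟨dz_inj n, ?_⟩
  simp [ZMod.card]

lemma toZ_surj (n : ℕ) (a : ZMod (2 ^ n)) : ∃ x : ℤ_[2], PadicInt.toZModPow n x = a :=
  ⟨(a.val : ℤ_[2]), by rw [map_natCast, ZMod.natCast_zmod_val]⟩

lemma D_surj (n : ℕ) (v : Fin n → ZMod 2) : ∃ x, D n x = v := by
  obtain ⟨a, rfl⟩ := (dz_bij n).2 v
  obtain ⟨x, rfl⟩ := toZ_surj n a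
  exact ⟨x, (dz_toZMod n x).symm⟩

lemma D_eq_iff (n : ℕ) (x y : ℤ_[2]) :
    D n x = D n y ↔ PadicInt.toZModPow n x = PadicInt.toZModPow n y := by
  rw [← dz_toZMod, ← dz_toZMod]
  exact (dz_inj n).eq_iff

/-- induced transitive system on digit vectors -/
def Erg (T : ℤ_[2] → ℤ_[2]) (n : ℕ) : Prop :=
  ∃ F : (Fin n → ZMod 2) → (Fin n → ZMod 2), (∀ x, F (D n x) = D n (T x)) ∧
    ∀ a b, ∃ k : ℕ, F^[k] a = b

lemma bij_of_trans {α : Type*} [Finite α] (f : α → α)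
    (hf : ∀ a b : α, ∃ k : ℕ, f^[k] a = b) : Function.Bijective f := by
  rw [← Finite.surjective_iff_bijective]
  intro b
  obtain ⟨k, hk⟩ := hf (f b) b
  exact ⟨f^[k] b, by rw [← iterate_succ_apply' f, iterate_succ_apply, hk]⟩

lemma erg_iff (T : ℤ_[2] → ℤ_[2]) : Paper.Ergodic 2 T ↔ ∀ n, Erg T n := by
  constructor
  · intro h n
    rcases Nat.eq_zero_or_pos n with rfl | hn
    · exact ⟨id, fun x => Subsingleton.elim _ _, fun a b => ⟨0, Subsingleton.elim _ _⟩⟩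
    obtain ⟨fn, h1, -, h3⟩ := h n hn
    let E := Equiv.ofBijective _ (dz_bij n)
    have hE : ∀ x, E (PadicInt.toZModPow n x) = D n x := dz_toZMod n
    have hsc : Semiconj E fn (fun v => E (fn (E.symm v))) := fun a => by simp
    refine ⟨fun v => E (fn (E.symm v)), ?_, ?_⟩
    · intro x
      beta_reduce
      rw [← hE, ← hE, E.symm_apply_apply, h1]
    · intro a b
      obtain ⟨k, hk⟩ := h3 (E.symm a) (E.symm b)
      refine ⟨k, ?_⟩
      have := (hsc.iterate_right k).eq (E.symm a)
      rw [hk] at this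
      simpa using this.symm
  · intro h n _
    obtain ⟨F, h1, h3⟩ := h n
    let E := Equiv.ofBijective _ (dz_bij n)
    have hE : ∀ x, E (PadicInt.toZModPow n x) = D n x := dz_toZMod n
    have hsc : Semiconj E.symm F (fun v => E.symm (F (E v))) := fun a => by simp
    have ht : ∀ a b : ZMod (2 ^ n), ∃ k : ℕ, (fun v => E.symm (F (E v)))^[k] a = b := by
      intro a b
      obtain ⟨k, hk⟩ := h3 (E a) (E b)
      refine ⟨k, ?_⟩
      have := (hsc.iterate_right k).eq (E a)
      rw [hk] at this
      simpa using this.symm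
    refine ⟨fun v => E.symm (F (E v)), ?_, bij_of_trans _ ht, ht⟩
    intro x
    beta_reduce
    rw [hE, h1, ← hE, E.symm_apply_apply]

lemma pre_ext (n : ℕ) (x y : Fin (n + 1) → ZMod 2)
    (h : (fun j : Fin n => x j.castSucc) = fun j : Fin n => y j.castSucc)
    (h' : x (Fin.last n) = y (Fin.last n)) : x = y := by
  funext j
  refine Fin.lastCases h' (fun i => congrFun h i) j

lemma pre_surj (n : ℕ) (a : Fin n → ZMod 2) (c : ZMod 2) :
    ∃ x : Fin (n + 1) → ZMod 2, (fun j : Fin n => x j.castSucc) = a ∧ x (Fin.last n) = c :=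
  ⟨Fin.snoc (α := fun _ => ZMod 2) a c, by funext j; simp, by simp⟩

lemma forward (T : ℤ_[2] → ℤ_[2]) (h : ∀ n, Erg T n) (n : ℕ) :
    ∃ φ : (Fin n → ZMod 2) → ZMod 2, ∑ a, φ a = 1 ∧
      ∀ x, Paper.digit n (T x) = Paper.digit n x + φ (D n x) := by
  obtain ⟨f, f1, f2⟩ := h n
  obtain ⟨F, F1, F2⟩ := h (n + 1)
  have hπ : ∀ v : Fin (n + 1) → ZMod 2,
      (fun j : Fin n => F v j.castSucc) = f (fun j : Fin n => v j.castSucc) := by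
    intro v
    obtain ⟨x, rfl⟩ := D_surj (n + 1) v
    rw [F1]
    exact (f1 x).symm
  let φ : (Fin n → ZMod 2) → ZMod 2 :=
    fun a => F (Fin.snoc (α := fun _ => ZMod 2) a 0) (Fin.last n)
  have hd : ∀ v : Fin (n + 1) → ZMod 2,
      F v (Fin.last n) = v (Fin.last n) + φ (fun j : Fin n => v j.castSucc) := by
    intro v
    by_cases hv : v = Fin.snoc (α := fun _ => ZMod 2) (fun j : Fin n => v j.castSucc) 0
    · have h0 : v (Fin.last n) = 0 := by rw [hv]; simp
      rw [h0, zero_add]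
      exact congrArg (fun w => F w (Fin.last n)) hv
    · have h1 : v (Fin.last n) = 1 := by
        have : v (Fin.last n) ≠ 0 := by
          intro h0
          apply hv
          apply pre_ext
          · simp
          · simpa using h0
        generalize v (Fin.last n) = s at this
        revert s; decide
      have hne : F v (Fin.last n) ≠ φ (fun j : Fin n => v j.castSucc) := by
        intro he
        apply hv
        apply (bij_of_trans F F2).1
        apply pre_ext
        · rw [hπ, hπ]; simp
        · exact he
      rw [h1]
      generalize F v (Fin.last n) = s at hne
      generalize φ (fun j : Fin n => v j.castSucc) = t at hne
      revert s t; decide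
  refine ⟨φ, ?_, ?_⟩
  · exact (skew f F (fun v j => v j.castSucc) (fun v => v (Fin.last n)) φ hπ hd (pre_ext n)
      (pre_surj n) f2).1 F2
  · intro x
    have := hd (D (n + 1) x)
    rw [F1] at this
    exact this

lemma backward (T : ℤ_[2] → ℤ_[2]) (φ : ∀ n, (Fin n → ZMod 2) → ZMod 2)
    (h1 : ∀ n, ∑ a, φ n a = 1)
    (h2 : ∀ n x, Paper.digit n (T x) = Paper.digit n x + φ n (D n x)) (n : ℕ) : Erg T n := by
  induction n with
  | zero => exact ⟨id, fun x => Subsingleton.elim _ _, fun a b => ⟨0, Subsingleton.elim _ _⟩⟩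
  | succ n ih =>
    obtain ⟨f, f1, f2⟩ := ih
    let F : (Fin (n + 1) → ZMod 2) → (Fin (n + 1) → ZMod 2) := fun v =>
      Fin.snoc (α := fun _ => ZMod 2) (f (fun j : Fin n => v j.castSucc))
        (v (Fin.last n) + φ n (fun j : Fin n => v j.castSucc))
    refine ⟨F, ?_, ?_⟩
    · intro x
      apply pre_ext
      · have := f1 x
        simp only [F, Fin.snoc_castSucc]
        exact this
      · simp only [F, Fin.snoc_last]
        exact (h2 n x).symm
    · exact (skew f F (fun v j => v j.castSucc) (fun v => v (Fin.last n)) (φ n)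
        (fun v => by funext j; simp [F]) (fun v => by simp [F]) (pre_ext n)
        (pre_surj n) f2).2 (h1 n)

end Aux5

/-- `T : ℤ₂ → ℤ₂` is compatible and ergodic iff for every `i`
there is a Boolean function `φ_i` of `i` variables of odd weight such that
`δ_i (T x) = δ_i x + φ_i (δ₀ x, …, δ_{i-1} x)` for all `x`. -/
theorem statement5 (T : ℤ_[2] → ℤ_[2]) :
    (Paper.Compatible 2 T ∧ Paper.Ergodic 2 T) ↔
      ∀ i : ℕ, ∃ φ : (Fin i → ZMod 2) → ZMod 2,
        Odd ((Finset.univ.filter (fun v : Fin i → ZMod 2 => φ v = 1)).card) ∧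
        ∀ x : ℤ_[2],
          Paper.digit i (T x) = Paper.digit i x + φ (fun j => Paper.digit j.val x) := by
  constructor
  · rintro ⟨-, hE⟩ i
    obtain ⟨φ, h1, h2⟩ := Aux5.forward T ((Aux5.erg_iff T).1 hE) i
    exact ⟨φ, (Aux5.odd_iff φ).2 h1, h2⟩
  · intro h
    choose φ h1 h2 using h
    refine ⟨?_, (Aux5.erg_iff T).2
      (Aux5.backward T φ (fun n => (Aux5.odd_iff (φ n)).1 (h1 n)) h2)⟩
    intro n _ x y hxy
    rw [← Aux5.D_eq_iff] at hxy ⊢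
    funext j
    have hj : ∀ i, i < n → Paper.digit i x = Paper.digit i y := fun i hi => congrFun hxy ⟨i, hi⟩
    change Paper.digit j.val (T x) = Paper.digit j.val (T y)
    rw [h2, h2, hj _ j.isLt]
    congr 2
    funext i
    exact hj _ (i.isLt.trans j.isLt)
end

section
/- For every n ≥ 1, the number of maps f : ℤ/2^n → ℤ/2^n that are compatible (for every r ≤ n and all x, y ∈ ℤ/2^n, x ≡ y (mod 2^r) implies f(x) ≡ f(y) (mod 2^r)) and transitive (f is a permutation of ℤ/2^n consisting of a single cycle of length 2^n) is exactly 2^{2^n − n − 1}. -/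
def GoodMap (n : ℕ) (f : ZMod (2 ^ n) → ZMod (2 ^ n)) : Prop :=
  (∀ r ≤ n, ∀ x y : ZMod (2 ^ n),
    x.val % 2 ^ r = y.val % 2 ^ r → (f x).val % 2 ^ r = (f y).val % 2 ^ r) ∧
  Function.Bijective f ∧
  ∀ a b : ZMod (2 ^ n), ∃ k : ℕ, f^[k] a = b

def skewMap {α : Type*} (g : α → α) (h : α → ZMod 2) (p : α × ZMod 2) : α × ZMod 2 :=
  (g p.1, p.2 + h p.1)

theorem aux_bij {α : Type*} [Finite α] (g : α → α)
    (ht : ∀ a b, ∃ k : ℕ, g^[k] a = b) : Function.Bijective g := by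
  refine Function.Surjective.bijective_of_finite ?_
  intro b
  obtain ⟨k, hk⟩ := ht (g b) b
  exact ⟨g^[k] b, by rw [← Function.iterate_succ_apply' g, Function.iterate_succ_apply]; exact hk⟩

theorem aux_iter {α : Type*} (g : α → α) (h : α → ZMod 2) (k : ℕ) (x : α) (b : ZMod 2) :
    (skewMap g h)^[k] (x, b) = (g^[k] x, b + ∑ i ∈ Finset.range k, h (g^[i] x)) := by
  induction k with
  | zero => simp
  | succ k ih =>
    rw [Function.iterate_succ_apply', ih, Function.iterate_succ_apply', Finset.sum_range_succ]
    simp [skewMap, add_assoc]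

theorem aux_period {α : Type*} [Fintype α] (g : α → α) (h : α → ZMod 2)
    (ht : ∀ a b, ∃ k : ℕ, g^[k] a = b) (x : α) (b : ZMod 2) :
    (skewMap g h)^[Function.minimalPeriod g x] (x, b) = (x, b + ∑ a, h a) := by
  have hpos : 0 < Function.minimalPeriod g x := by
    obtain ⟨k, hk⟩ := ht (g x) x
    refine Function.IsPeriodicPt.minimalPeriod_pos (n := k + 1) (Nat.succ_pos k) ?_
    rw [Function.IsPeriodicPt, Function.IsFixedPt, Function.iterate_succ_apply]
    exact hk
  rw [aux_iter, Function.iterate_minimalPeriod]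
  congr 2
  refine Finset.sum_nbij (fun i => g^[i] x) (by simp) ?_ ?_ (by simp)
  · intro i hi j hj hij
    refine Function.iterate_injOn_Iio_minimalPeriod (f := g) (x := x) ?_ ?_ hij
    · simpa using hi
    · simpa using hj
  · intro a _
    obtain ⟨k, hk⟩ := ht x a
    refine ⟨k % Function.minimalPeriod g x, ?_, ?_⟩
    · simpa using Nat.mod_lt _ hpos
    · simpa [Function.iterate_mod_minimalPeriod_eq] using hk

theorem aux_fst {α : Type*} (g : α → α) (h : α → ZMod 2)
    (ht : ∀ a b, ∃ k : ℕ, (skewMap g h)^[k] a = b) : ∀ a b, ∃ k : ℕ, g^[k] a = b := by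
  intro a b
  obtain ⟨k, hk⟩ := ht (a, 0) (b, 0)
  rw [aux_iter] at hk
  exact ⟨k, (Prod.ext_iff.1 hk).1⟩

theorem aux_zmod2 (c : ZMod 2) : c = 0 ∨ c = 1 := by
  revert c; decide

theorem aux_trans {α : Type*} [Fintype α] (g : α → α) (h : α → ZMod 2)
    (ht : ∀ a b, ∃ k : ℕ, g^[k] a = b) (hs : ∑ a, h a = 1) :
    ∀ a b, ∃ k : ℕ, (skewMap g h)^[k] a = b := by
  rintro ⟨x, b⟩ ⟨y, c⟩
  obtain ⟨k, hk⟩ := ht x y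
  have h1 := aux_iter g h k x b
  rw [hk] at h1
  set d := b + ∑ i ∈ Finset.range k, h (g^[i] x) with hd
  by_cases hdc : d = c
  · exact ⟨k, by rw [h1, hdc]⟩
  · refine ⟨Function.minimalPeriod g y + k, ?_⟩
    rw [Function.iterate_add_apply, h1, aux_period g h ht, hs]
    congr 1
    clear_value d
    clear h1 hd
    revert d c; decide

theorem aux_sum {α : Type*} [Fintype α] [Nonempty α] (g : α → α) (h : α → ZMod 2)
    (ht : ∀ a b, ∃ k : ℕ, (skewMap g h)^[k] a = b) : ∑ a, h a = 1 := by
  have hg := aux_fst g h ht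
  rcases aux_zmod2 (∑ a, h a) with h0 | h1
  · exfalso
    obtain ⟨x⟩ := ‹Nonempty α›
    obtain ⟨k, hk⟩ := ht (x, 0) (x, 1)
    have hp := aux_period g h hg x 0
    rw [h0, add_zero] at hp
    have hx : g^[k] x = x := by
      have := hk
      rw [aux_iter] at this
      exact (Prod.ext_iff.1 this).1
    have hdvd : Function.minimalPeriod g x ∣ k := Function.IsPeriodicPt.minimalPeriod_dvd hx
    have hp2 : Function.IsPeriodicPt (skewMap g h) k (x, 0) :=
      Function.IsPeriodicPt.trans_dvd hp hdvd
    have := hk.symm.trans hp2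
    simpa using this
  · exact h1

theorem aux_card {α : Type*} [Fintype α] [Nonempty α] :
    Nat.card {h : α → ZMod 2 // ∑ a, h a = 1} = 2 ^ (Fintype.card α - 1) := by
  classical
  obtain ⟨a⟩ := ‹Nonempty α›
  have e : ({h : α → ZMod 2 // ∑ a, h a = 1} × ZMod 2) ≃ (α → ZMod 2) :=
    { toFun := fun p => p.1.1 + Pi.single a p.2
      invFun := fun k => (⟨k - Pi.single a (∑ x, k x - 1), by
        simp [Finset.sum_sub_distrib]⟩, ∑ x, k x - 1)
      left_inv := by
        rintro ⟨⟨h, hh⟩, c⟩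
        have : ∑ x, (h + Pi.single a c : α → ZMod 2) x - 1 = c := by
          simp [Finset.sum_add_distrib, hh]
        simp only [this, add_sub_cancel_right]
      right_inv := by
        intro k
        simp }
  have hc := Nat.card_congr e
  have hp : 0 < Fintype.card α := Fintype.card_pos_iff.2 ⟨a⟩
  rw [Nat.card_prod, Nat.card_fun] at hc
  simp only [Nat.card_zmod, Nat.card_eq_fintype_card (α := α)] at hc
  obtain ⟨m, hm⟩ := Nat.exists_eq_succ_of_ne_zero hp.ne'
  rw [hm] at hc ⊢
  rw [Nat.succ_eq_add_one, pow_succ] at hc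
  simpa using hc

def splitTop (n : ℕ) : ZMod (2 ^ (n + 1)) ≃ ZMod (2 ^ n) × ZMod 2 where
  toFun x := ((x.val : ZMod (2 ^ n)), ((x.val / 2 ^ n : ℕ) : ZMod 2))
  invFun p := ((p.1.val + 2 ^ n * p.2.val : ℕ) : ZMod (2 ^ (n + 1)))
  left_inv x := by
    have hx : x.val < 2 ^ n * 2 := by rw [← pow_succ]; exact x.val_lt
    have h2 : x.val / 2 ^ n < 2 := Nat.div_lt_of_lt_mul hx
    simp only [ZMod.val_natCast]
    rw [Nat.mod_eq_of_lt h2, Nat.mod_add_div]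
    simp
  right_inv p := by
    obtain ⟨a, b⟩ := p
    have ha : a.val < 2 ^ n := a.val_lt
    have hb : b.val < 2 := b.val_lt
    have hlt : a.val + 2 ^ n * b.val < 2 ^ (n + 1) := by
      rw [pow_succ]; nlinarith
    simp only [ZMod.val_natCast]
    rw [Nat.mod_eq_of_lt hlt]
    refine Prod.ext ?_ ?_
    · have : ((2 : ZMod (2 ^ n)) ^ n) = 0 := by
        have := ZMod.natCast_self (2 ^ n)
        push_cast at this; exact this
      simp [this]
    · rw [Nat.add_mul_div_left _ _ (by positivity), Nat.div_eq_of_lt ha]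
      simp

theorem splitTop_val (n r : ℕ) (hr : r ≤ n) (x : ZMod (2 ^ (n + 1))) :
    (splitTop n x).1.val % 2 ^ r = x.val % 2 ^ r := by
  simp only [splitTop, Equiv.coe_fn_mk, ZMod.val_natCast]
  exact Nat.mod_mod_of_dvd _ (pow_dvd_pow 2 hr)

theorem splitTop_symm_val (n r : ℕ) (hr : r ≤ n) (p : ZMod (2 ^ n) × ZMod 2) :
    ((splitTop n).symm p).val % 2 ^ r = p.1.val % 2 ^ r := by
  rw [← splitTop_val n r hr, Equiv.apply_symm_apply]

theorem aux_conj_iter {α β : Type*} (e : α ≃ β) (F : β → β) (k : ℕ) (x : α) :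
    (fun x => e.symm (F (e x)))^[k] x = e.symm (F^[k] (e x)) := by
  induction k with
  | zero => simp
  | succ k ih => rw [Function.iterate_succ_apply', ih, Function.iterate_succ_apply']; simp

theorem aux_conj_trans {α β : Type*} (e : α ≃ β) (F : β → β) :
    (∀ a b, ∃ k : ℕ, (fun x => e.symm (F (e x)))^[k] a = b) ↔ ∀ a b, ∃ k : ℕ, F^[k] a = b := by
  simp only [aux_conj_iter, Equiv.symm_apply_eq]
  constructor
  · intro H a b
    simpa using H (e.symm a) (e.symm b)
  · intro H a b
    exact H _ _

theorem aux_good_succ (n : ℕ) (g : ZMod (2 ^ n) → ZMod (2 ^ n)) (h : ZMod (2 ^ n) → ZMod 2) :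
    GoodMap (n + 1) (fun x => (splitTop n).symm (skewMap g h (splitTop n x))) ↔
      GoodMap n g ∧ ∑ a, h a = 1 := by
  constructor
  · rintro ⟨hc, _, ht⟩
    rw [aux_conj_trans] at ht
    have hg := aux_fst g h ht
    refine ⟨⟨?_, aux_bij g hg, hg⟩, aux_sum g h ht⟩
    intro r hr x y hxy
    have := hc r (by omega) ((splitTop n).symm (x, 0)) ((splitTop n).symm (y, 0))
      (by simpa [splitTop_symm_val n r hr] using hxy)
    simpa [splitTop_symm_val n r hr, skewMap] using this
  · rintro ⟨⟨hc, _, ht⟩, hs⟩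
    have hT := (aux_conj_trans (splitTop n) (skewMap g h)).2 (aux_trans g h ht hs)
    refine ⟨?_, aux_bij _ hT, hT⟩
    intro r hr x y hxy
    rcases Nat.lt_or_ge n r with hlt | hle
    · have : r = n + 1 := by omega
      subst this
      rw [Nat.mod_eq_of_lt x.val_lt, Nat.mod_eq_of_lt y.val_lt] at hxy
      rw [ZMod.val_injective _ hxy]
    · rw [splitTop_symm_val n r hle, splitTop_symm_val n r hle]
      apply hc r hle
      rw [splitTop_val n r hle, splitTop_val n r hle]
      exact hxy

theorem aux_exists (n : ℕ) (f : ZMod (2 ^ (n + 1)) → ZMod (2 ^ (n + 1)))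
    (hf : GoodMap (n + 1) f) : ∃ (g : ZMod (2 ^ n) → ZMod (2 ^ n)) (h : ZMod (2 ^ n) → ZMod 2),
      (fun x => (splitTop n).symm (skewMap g h (splitTop n x))) = f := by
  obtain ⟨hc, hb, _⟩ := hf
  refine ⟨fun a => (splitTop n (f ((splitTop n).symm (a, 0)))).1,
    fun a => (splitTop n (f ((splitTop n).symm (a, 0)))).2, ?_⟩
  funext x
  rw [Equiv.symm_apply_eq]
  obtain ⟨⟨a, b⟩, rfl⟩ := (splitTop n).symm.surjective x
  simp only [skewMap, Equiv.apply_symm_apply]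
  have h1 : (splitTop n (f ((splitTop n).symm (a, 0)))).1 = (splitTop n (f ((splitTop n).symm (a, b)))).1 := by
    have := hc n (by omega) ((splitTop n).symm (a, 0)) ((splitTop n).symm (a, b))
      (by simp [splitTop_symm_val n n le_rfl])
    rw [← splitTop_val n n le_rfl, ← splitTop_val n n le_rfl, Nat.mod_eq_of_lt (ZMod.val_lt _),
      Nat.mod_eq_of_lt (ZMod.val_lt _)] at this
    exact ZMod.val_injective _ this
  refine Prod.ext h1 ?_
  rcases aux_zmod2 b with rfl | rfl
  · simp
  · have hne : (splitTop n (f ((splitTop n).symm (a, 0)))).2 ≠ (splitTop n (f ((splitTop n).symm (a, 1)))).2 := by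
      intro h2
      have := (splitTop n).symm.injective (hb.1 ((splitTop n).injective (Prod.ext h1 h2)))
      simp at this
    show 1 + (splitTop n (f ((splitTop n).symm (a, 0)))).2 = (splitTop n (f ((splitTop n).symm (a, 1)))).2
    generalize (splitTop n (f ((splitTop n).symm (a, 0)))).2 = c at *
    generalize (splitTop n (f ((splitTop n).symm (a, 1)))).2 = d at *
    clear h1
    revert c d; decide

theorem aux_step (n : ℕ) : Nat.card {f // GoodMap (n + 1) f} =
    Nat.card {f // GoodMap n f} * 2 ^ (2 ^ n - 1) := by
  have hk : Nat.card {h : ZMod (2 ^ n) → ZMod 2 // ∑ a, h a = 1} = 2 ^ (2 ^ n - 1) := by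
    rw [aux_card, ZMod.card]
  rw [← hk, ← Nat.card_prod]
  symm
  refine Nat.card_eq_of_bijective
    (fun p : {f // GoodMap n f} × {h : ZMod (2 ^ n) → ZMod 2 // ∑ a, h a = 1} =>
      (⟨fun x => (splitTop n).symm (skewMap p.1.1 p.2.1 (splitTop n x)),
        (aux_good_succ n _ _).2 ⟨p.1.2, p.2.2⟩⟩ : {f // GoodMap (n + 1) f})) ⟨?_, ?_⟩
  · rintro ⟨⟨g, hg⟩, ⟨h, hh⟩⟩ ⟨⟨g', hg'⟩, ⟨h', hh'⟩⟩ H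
    have H2 : ∀ a, g a = g' a ∧ h a = h' a := by
      intro a
      have := congrFun (Subtype.ext_iff.1 H) ((splitTop n).symm (a, 0))
      simpa [skewMap] using this
    have e1 : g = g' := funext fun a => (H2 a).1
    have e2 : h = h' := funext fun a => (H2 a).2
    subst e1 e2
    rfl
  · rintro ⟨f, hf⟩
    obtain ⟨g, h, rfl⟩ := aux_exists n f hf
    have := (aux_good_succ n g h).1 hf
    exact ⟨(⟨g, this.1⟩, ⟨h, this.2⟩), rfl⟩

theorem aux_zero : Nat.card {f // GoodMap 0 f} = 1 := by
  have hs : Subsingleton (ZMod (2 ^ 0)) := inferInstanceAs (Subsingleton (Fin 1))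
  rw [Nat.card_eq_one_iff_unique]
  refine ⟨⟨fun a b => Subtype.ext (funext fun x => Subsingleton.elim _ _)⟩, ⟨⟨id, ?_⟩⟩⟩
  exact ⟨fun r _ x y h => h, Function.bijective_id, fun a b => ⟨0, Subsingleton.elim _ _⟩⟩

theorem aux_main (n : ℕ) : Nat.card {f // GoodMap n f} = 2 ^ (2 ^ n - n - 1) := by
  induction n with
  | zero => rw [aux_zero]; rfl
  | succ n ih =>
    rw [aux_step, ih, ← pow_add]
    congr 1
    have : n < 2 ^ n := Nat.lt_two_pow_self
    rw [pow_succ]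
    omega

/-- for `n ≥ 1` there are exactly `2^(2^n − n − 1)` maps of `ℤ/2^n` to itself
that are compatible and transitive (a permutation consisting of a single cycle of
length `2^n`). -/
theorem statement6 (n : ℕ) (hn : 1 ≤ n) :
    Nat.card {f : ZMod (2 ^ n) → ZMod (2 ^ n) //
      (∀ r ≤ n, ∀ x y : ZMod (2 ^ n),
        x.val % 2 ^ r = y.val % 2 ^ r → (f x).val % 2 ^ r = (f y).val % 2 ^ r) ∧
      Function.Bijective f ∧
      ∀ a b : ZMod (2 ^ n), ∃ k : ℕ, f^[k] a = b} = 2 ^ (2 ^ n - n - 1) :=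
  aux_main n
end

section
/- Let f, v : ℕ → ℕ be compatible maps with f ergodic. Then each of the four maps x ↦ f(x + 4·v(x)), x ↦ f(x ⊕ 4·v(x)), x ↦ f(x) + 4·v(x), and x ↦ f(x) ⊕ 4·v(x) is compatible and ergodic. -/
namespace Erg

def C (h : ℕ → ℕ) (N : ℕ) : Prop := ∀ u w, u % N = w % N → h u % N = h w % N

def T (h : ℕ → ℕ) (N : ℕ) : Prop := ∀ a b, ∃ k, h^[k] a % N = b % N

lemma C.iter {h : ℕ → ℕ} {N : ℕ} (hc : C h N) (k : ℕ) : C (h^[k]) N := by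
  induction k with
  | zero => intro u w e; simpa using e
  | succ k ih =>
    intro u w e
    rw [Function.iterate_succ_apply, Function.iterate_succ_apply]
    exact ih _ _ (hc _ _ e)

lemma redIter {h : ℕ → ℕ} {N : ℕ} (hc : C h N) (hN : 0 < N) (k : ℕ) :
    (fun r => h r % N)^[k] 0 = h^[k] 0 % N := by
  induction k with
  | zero => simp
  | succ k ih =>
    rw [Function.iterate_succ_apply', Function.iterate_succ_apply', ih]
    exact hc _ _ (Nat.mod_mod _ _)

lemma orbit {h : ℕ → ℕ} {N : ℕ} (hc : C h N) (hN : 0 < N) (ht : T h N) :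
    h^[N] 0 % N = 0 ∧ Set.InjOn (fun i => h^[i] 0 % N) (Finset.range N : Set ℕ) ∧
    (Finset.range N).image (fun i => h^[i] 0 % N) = Finset.range N := by
  set fn : ℕ → ℕ := fun r => h r % N with hfn
  have hi : ∀ k, fn^[k] 0 = h^[k] 0 % N := redIter hc hN
  obtain ⟨k, hk⟩ := ht (h 0) 0
  have hper : Function.IsPeriodicPt fn (k+1) 0 := by
    change fn^[k+1] 0 = 0
    rw [hi, Function.iterate_succ_apply, hk]; simp
  have hpp : 0 < Function.minimalPeriod fn 0 := hper.minimalPeriod_pos (Nat.succ_pos k)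
  set p := Function.minimalPeriod fn 0 with hp
  have hinj : Set.InjOn (fun i => fn^[i] 0) (Finset.range p : Set ℕ) := by
    have := Function.iterate_injOn_Iio_minimalPeriod (f := fn) (x := 0)
    intro a ha b hb e
    exact this (by simpa using ha) (by simpa using hb) e
  have him : (Finset.range p).image (fun i => fn^[i] 0) = Finset.range N := by
    ext b
    simp only [Finset.mem_image, Finset.mem_range]
    constructor
    · rintro ⟨i, _, rfl⟩
      rw [hi]; exact Nat.mod_lt _ hN
    · intro hb
      obtain ⟨k, hk⟩ := ht 0 b
      refine ⟨k % p, Nat.mod_lt _ hpp, ?_⟩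
      rw [Function.iterate_mod_minimalPeriod_eq, hi, hk, Nat.mod_eq_of_lt hb]
  have hpN : p = N := by
    have := Finset.card_image_of_injOn hinj
    rw [him] at this
    simpa using this.symm
  refine ⟨?_, ?_, ?_⟩
  · rw [← hi, ← hpN]; exact Function.iterate_minimalPeriod
  · rw [← hpN]; 
    intro a ha b hb e
    refine hinj ha hb ?_
    simp only [hi]; simpa only [hpN] using e
  · rw [hpN] at him; simpa only [hi] using him

lemma T_of_zero {h : ℕ → ℕ} {N : ℕ} (hc : C h N) (hN : 0 < N) (hp : h^[N] 0 % N = 0)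
    (h0 : ∀ b, ∃ k, h^[k] 0 % N = b % N) : T h N := by
  have hp' : ∀ j, h^[j * N] 0 % N = 0 := by
    intro j
    induction j with
    | zero => simp
    | succ j ih =>
      rw [Nat.succ_mul, Function.iterate_add_apply]
      exact (hc.iter (j * N) _ 0 (by simpa using hp)).trans ih
  intro a b
  obtain ⟨j, hj⟩ := h0 a
  obtain ⟨k, hk⟩ := h0 b
  refine ⟨k + j * (N - 1), ?_⟩
  rw [← hk, ← hc.iter _ _ _ hj, ← Function.iterate_add_apply]
  have e : k + j * (N - 1) + j = k + j * N := by
    obtain ⟨M, rfl⟩ : ∃ M, N = M + 1 := ⟨N - 1, by omega⟩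
    simp; ring
  rw [e, Function.iterate_add_apply]
  exact hc.iter _ _ _ (by simpa using hp' j)

lemma T.inj {h : ℕ → ℕ} {N : ℕ} (hc : C h N) (hN : 0 < N) (ht : T h N) (x y : ℕ)
    (e : h x % N = h y % N) : x % N = y % N := by
  have hs : Function.Surjective (fun a : Fin N => (⟨h a % N, Nat.mod_lt _ hN⟩ : Fin N)) := by
    intro b
    obtain ⟨k, hk⟩ := ht (h b) b
    refine ⟨⟨h^[k] b % N, Nat.mod_lt _ hN⟩, ?_⟩
    apply Fin.ext
    simp only
    rw [hc _ _ (Nat.mod_mod _ _), ← Function.iterate_succ_apply' h, Function.iterate_succ_apply, hk,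
      Nat.mod_eq_of_lt b.2]
  have hi := Finite.injective_iff_surjective.2 hs
  have := @hi ⟨x % N, Nat.mod_lt _ hN⟩ ⟨y % N, Nat.mod_lt _ hN⟩ (by
    apply Fin.ext
    simp only
    rw [hc _ _ (Nat.mod_mod x _), hc _ _ (Nat.mod_mod y _), e])
  simpa using this

lemma half {a b N : ℕ} (h1 : a % N = b % N) (h2 : a % (2 * N) ≠ b % (2 * N)) :
    a % (2 * N) = (b + N) % (2 * N) := by
  rcases Nat.eq_zero_or_pos N with rfl | hN
  · simp at *; omega
  have ha := Nat.mod_add_div a N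
  have hb := Nat.mod_add_div b N
  have e1 : ∀ c, c % (2*N) = c % N + N * (c / N % 2) := by
    intro c; rw [mul_comm, Nat.mod_mul]
  rw [e1, e1 b] at h2
  rw [e1, e1 (b+N)]
  rw [Nat.add_div_right _ hN, Nat.add_mod_right, h1]
  rw [h1] at h2
  have : a / N % 2 ≠ b / N % 2 := fun h => h2 (by rw [h])
  have : a / N % 2 = (b / N).succ % 2 := by omega
  rw [this]

/-- lifting property -/
def L (h : ℕ → ℕ) (N : ℕ) : Prop := ∀ x, h (x + N) % (2 * N) = (h x + N) % (2 * N)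

lemma L_of_ne {h : ℕ → ℕ} {N : ℕ} (hc : C h N)
    (hne : ∀ x, h (x + N) % (2 * N) ≠ h x % (2 * N)) : L h N :=
  fun x => half (hc _ _ (by simp)) (hne x)

lemma ne_of_T {h : ℕ → ℕ} {N : ℕ} (hN : 0 < N) (hc : C h (2 * N)) (ht : T h (2 * N)) (x : ℕ) :
    h (x + N) % (2 * N) ≠ h x % (2 * N) := by
  intro e
  have h1 := ht.inj hc (by omega) _ _ e
  have h2 : (x + N) ≡ x + 0 [MOD 2 * N] := h1
  have h3 := Nat.ModEq.add_left_cancel' x h2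
  have h4 : N % (2 * N) = 0 := by simpa [Nat.ModEq] using h3
  rw [Nat.mod_eq_of_lt (by omega)] at h4
  omega

lemma step_sum {h : ℕ → ℕ} {N : ℕ} (hN : 0 < N) (hc : C h N) (ht : T h N) (hL : L h N) :
    ((h^[N] 0 : ℕ) : ZMod (2 * N)) =
      ((∑ r ∈ Finset.range N, h r : ℕ) : ZMod (2 * N)) - ((∑ r ∈ Finset.range N, r : ℕ) : ZMod (2 * N)) := by
  have hL' : ∀ x, ((h (x + N) : ℕ) : ZMod (2 * N)) = h x + N := by
    intro x
    have := (ZMod.natCast_eq_natCast_iff' _ _ _).2 (hL x)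
    push_cast at this
    exact this
  have hF : ∀ r q : ℕ, ((h (r + N * q) : ℕ) : ZMod (2 * N)) - ((r + N * q : ℕ) : ZMod (2 * N))
      = (h r : ZMod (2 * N)) - r := by
    intro r q
    induction q with
    | zero => simp
    | succ q ih =>
      rw [← ih, Nat.mul_succ, ← Nat.add_assoc, hL']
      push_cast; ring
  have hF' : ∀ x : ℕ, ((h x : ℕ) : ZMod (2 * N)) - (x : ZMod (2 * N))
      = (h (x % N) : ZMod (2 * N)) - ((x % N : ℕ) : ZMod (2 * N)) := by
    intro x
    have := hF (x % N) (x / N)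
    rw [Nat.mod_add_div] at this
    exact this
  obtain ⟨-, hinj, him⟩ := orbit hc hN ht
  have htel := Finset.sum_range_sub (fun i => ((h^[i] 0 : ℕ) : ZMod (2 * N))) N
  have hF2 : ∀ i ∈ Finset.range N, ((h^[i + 1] 0 : ℕ) : ZMod (2 * N)) - ((h^[i] 0 : ℕ) : ZMod (2 * N))
      = (h (h^[i] 0 % N) : ZMod (2 * N)) - ((h^[i] 0 % N : ℕ) : ZMod (2 * N)) := by
    intro i _
    rw [Function.iterate_succ_apply', hF' (h^[i] 0)]
  rw [Finset.sum_congr rfl hF2] at htel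
  have himg := Finset.sum_image (f := fun r : ℕ => ((h r : ℕ) : ZMod (2 * N)) - (r : ZMod (2 * N))) hinj
  rw [him] at himg
  rw [← himg] at htel
  rw [Finset.sum_sub_distrib] at htel
  push_cast
  rw [htel]
  simp

lemma iterL {h : ℕ → ℕ} {N : ℕ} (hc : C h (2 * N)) (hL : L h N) (k : ℕ) : L (h^[k]) N := by
  induction k with
  | zero => intro x; rfl
  | succ k ih =>
    intro x
    rw [Function.iterate_succ_apply', Function.iterate_succ_apply', hc _ _ (ih x)]
    exact hL _

lemma T_succ {h : ℕ → ℕ} {N : ℕ} (hN : 0 < N) (hc : C h N) (hc2 : C h (2 * N)) (ht : T h N)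
    (hL : L h N) (hv : h^[N] 0 % (2 * N) = N % (2 * N)) : T h (2 * N) := by
  apply T_of_zero hc2 (by omega)
  · rw [two_mul, Function.iterate_add_apply, ← two_mul, hc2.iter _ _ _ hv]
    have := iterL hc2 hL N 0
    rw [zero_add] at this
    rw [this, Nat.add_mod, hv]
    simp [← two_mul]
  · intro b
    obtain ⟨k, hk⟩ := ht 0 b
    by_cases e : h^[k] 0 % (2 * N) = b % (2 * N)
    · exact ⟨k, e⟩
    · refine ⟨k + N, ?_⟩
      rw [Function.iterate_add_apply, hc2.iter _ _ _ hv]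
      have := iterL hc2 hL k 0
      rw [zero_add] at this
      rw [this]
      exact (half hk.symm (Ne.symm e)).symm

lemma val_of_T {h : ℕ → ℕ} {N : ℕ} (hN : 0 < N) (hc : C h N) (hc2 : C h (2 * N)) (ht : T h N)
    (ht2 : T h (2 * N)) : h^[N] 0 % (2 * N) = N % (2 * N) := by
  have h1 := (orbit hc hN ht).1
  obtain ⟨-, hinj, -⟩ := orbit hc2 (by omega) ht2
  have := half (a := h^[N] 0) (b := 0) (by simpa using h1) (by
    intro e
    have := @hinj N (by simp; omega) 0 (by simp; omega) (by simpa using e)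
    omega)
  simpa using this

/-- Inductive transfer step. -/
lemma transfer {f g : ℕ → ℕ} {N : ℕ} (hN : 0 < N) (fc : C f N) (fc2 : C f (2 * N))
    (gc : C g N) (gc2 : C g (2 * N)) (ft : T f N) (ft2 : T f (2 * N)) (gt : T g N)
    (gne : ∀ x, g (x + N) % (2 * N) ≠ g x % (2 * N))
    (hs : (∑ r ∈ Finset.range N, g r) % (2 * N) = (∑ r ∈ Finset.range N, f r) % (2 * N)) :
    T g (2 * N) := by
  have gL := L_of_ne gc gne
  have fL := L_of_ne fc (ne_of_T hN fc2 ft2)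
  apply T_succ hN gc gc2 gt gL
  rw [← val_of_T hN fc fc2 ft ft2]
  rw [← ZMod.natCast_eq_natCast_iff', step_sum hN gc gt gL, step_sum hN fc ft fL,
    (ZMod.natCast_eq_natCast_iff' _ _ _).2 hs]

lemma sum_mod {h : ℕ → ℕ} {N : ℕ} (hN : 0 < N) (hc : C h N) (ht : T h N) :
    ∑ r ∈ Finset.range N, h r % N = ∑ r ∈ Finset.range N, r := by
  have hinj : Set.InjOn (fun r => h r % N) (Finset.range N : Set ℕ) := by
    intro a ha b hb e
    have := ht.inj hc hN a b e
    simp at ha hb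
    rwa [Nat.mod_eq_of_lt ha, Nat.mod_eq_of_lt hb] at this
  have him : (Finset.range N).image (fun r => h r % N) = Finset.range N := by
    apply Finset.eq_of_subset_of_card_le
    · intro b hb
      simp only [Finset.mem_image] at hb
      obtain ⟨r, -, rfl⟩ := hb
      simpa using Nat.mod_lt _ hN
    · rw [Finset.card_image_of_injOn hinj]
  have := Finset.sum_image (f := fun r => r) hinj
  rw [him] at this
  exact this.symm

lemma sum_of_div {f g : ℕ → ℕ} {N : ℕ} (hN : 0 < N) (fc : C f N)
    (gc : C g N) (ft : T f N) (gt : T g N)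
    (hs : (∑ r ∈ Finset.range N, g r / N) % 2 = (∑ r ∈ Finset.range N, f r / N) % 2) :
    (∑ r ∈ Finset.range N, g r) % (2 * N) = (∑ r ∈ Finset.range N, f r) % (2 * N) := by
  have e : ∀ h : ℕ → ℕ, C h N → T h N → ∑ r ∈ Finset.range N, h r =
      ∑ r ∈ Finset.range N, r + N * ∑ r ∈ Finset.range N, h r / N := by
    intro h hc ht
    rw [← sum_mod hN hc ht, Finset.mul_sum, ← Finset.sum_add_distrib]
    exact Finset.sum_congr rfl fun r _ => (Nat.mod_add_div _ _).symm
  rw [e f fc ft, e g gc gt]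
  apply Nat.ModEq.add_left
  rw [mul_comm 2 N]
  exact Nat.ModEq.mul_left' N hs

lemma sum_even {w : ℕ → ℕ} {M : ℕ} (hw : ∀ x, w (x + M) % 2 = w x % 2) :
    (∑ r ∈ Finset.range (2 * M), w r) % 2 = 0 := by
  rw [two_mul, Finset.sum_range_add, ← Finset.sum_add_distrib, ← Nat.dvd_iff_mod_eq_zero]
  apply Finset.dvd_sum
  intro r _
  have := hw r
  rw [add_comm r M] at this
  omega

lemma sum_v {v : ℕ → ℕ} (hv : Paper.NatCompatible v) (n : ℕ) :
    2 ^ n ∣ ∑ r ∈ Finset.range (2 ^ (n + 1)), v r := by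
  induction n with
  | zero => simp
  | succ n ih =>
    rw [pow_succ 2 (n + 1), mul_two, Finset.sum_range_add]
    have : ∑ r ∈ Finset.range (2 ^ (n+1)), v (2 ^ (n+1) + r) ≡ ∑ r ∈ Finset.range (2 ^ (n+1)), v r [MOD 2 ^ (n+1)] := by
      unfold Nat.ModEq
      rw [Finset.sum_nat_mod, Finset.sum_nat_mod (f := v)]
      congr 1
      refine Finset.sum_congr rfl fun r _ => hv _ (by omega) _ _ (by simp)
    rw [← Nat.modEq_zero_iff_dvd]
    refine (this.add_left _).trans ?_
    rw [Nat.modEq_zero_iff_dvd, ← two_mul, pow_succ']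
    rw [pow_succ'] at ih
    exact Nat.mul_dvd_mul_left 2 ih

lemma compat_C {h : ℕ → ℕ} (hc : Paper.NatCompatible h) (n : ℕ) : C h (2 ^ n) := by
  rcases Nat.eq_zero_or_pos n with rfl | hn
  · intro u w _; simp [Nat.mod_one]
  · exact hc n hn

lemma erg_iff {h : ℕ → ℕ} (hc : Paper.NatCompatible h) :
    Paper.NatErgodic h ↔ ∀ n, T h (2 ^ n) := by
  have key : ∀ n (fn : ZMod (2 ^ n) → ZMod (2 ^ n)), (∀ u : ℕ, fn (u : ZMod (2 ^ n)) = (h u : ZMod (2 ^ n))) →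
      ∀ k u : ℕ, fn^[k] (u : ZMod (2 ^ n)) = ((h^[k] u : ℕ) : ZMod (2 ^ n)) := by
    intro n fn hfn k
    induction k with
    | zero => intro u; rfl
    | succ k ih => intro u; rw [Function.iterate_succ_apply, Function.iterate_succ_apply, hfn, ih]
  constructor
  · intro he n
    rcases Nat.eq_zero_or_pos n with rfl | hn
    · intro a b; exact ⟨0, by simp [Nat.mod_one]⟩
    obtain ⟨fn, hfn, -, ht⟩ := he n hn
    intro a b
    obtain ⟨k, hk⟩ := ht a b
    refine ⟨k, ?_⟩
    rw [key n fn hfn] at hk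
    exact (ZMod.natCast_eq_natCast_iff' _ _ _).1 hk
  · intro ht n hn
    have hfn : ∀ u : ℕ, (fun z : ZMod (2 ^ n) => ((h z.val : ℕ) : ZMod (2 ^ n))) (u : ZMod (2 ^ n)) = (h u : ZMod (2 ^ n)) := by
      intro u
      simp only
      rw [ZMod.natCast_eq_natCast_iff']
      apply hc n hn
      rw [ZMod.val_natCast, Nat.mod_mod]
    refine ⟨(fun z : ZMod (2 ^ n) => ((h z.val : ℕ) : ZMod (2 ^ n))), hfn, ?_, ?_⟩
    · rw [← Finite.injective_iff_bijective]
      intro x y e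
      have := (ht n).inj (compat_C hc n) (by positivity) _ _ ((ZMod.natCast_eq_natCast_iff' _ _ _).1 e)
      rw [← ZMod.natCast_eq_natCast_iff'] at this
      simpa using this
    · intro a b
      obtain ⟨k, hk⟩ := ht n a.val b.val
      refine ⟨k, ?_⟩
      have h1 := key n (fun z : ZMod (2 ^ n) => ((h z.val : ℕ) : ZMod (2 ^ n))) hfn k a.val
      rw [(ZMod.natCast_eq_natCast_iff' _ _ _).2 hk] at h1
      simpa using h1

/-- induction -/
lemma main {f g : ℕ → ℕ} (hf : Paper.NatCompatible f) (hg : Paper.NatCompatible g)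
    (hfe : Paper.NatErgodic f) (h2 : ∀ x, g x % 2 = f x % 2)
    (gne : ∀ n x, g (x + 2 ^ n) % (2 * 2 ^ n) ≠ g x % (2 * 2 ^ n))
    (hs : ∀ n, T g (2 ^ (n + 1)) → (∑ r ∈ Finset.range (2 ^ (n + 1)), g r) % (2 * 2 ^ (n + 1)) =
      (∑ r ∈ Finset.range (2 ^ (n + 1)), f r) % (2 * 2 ^ (n + 1))) : Paper.NatErgodic g := by
  rw [erg_iff hg]
  have ft := (erg_iff hf).1 hfe
  have cf := compat_C hf
  have cg := compat_C hg
  intro n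
  induction n with
  | zero => intro a b; exact ⟨0, by simp [Nat.mod_one]⟩
  | succ n ih =>
    have ft2 := ft (n + 1)
    have cf2 := cf (n + 1)
    have cg2 := cg (n + 1)
    rw [pow_succ'] at ft2 cf2 cg2 ⊢
    refine transfer (by positivity) (cf n) cf2 (cg n) cg2 (ft n) ft2 ih (gne n) ?_
    cases n with
    | zero => simpa using h2 0
    | succ n => exact hs n ih

lemma mod4 {v : ℕ → ℕ} (hv : Paper.NatCompatible v) (n u w : ℕ) (e : u % 2 ^ n = w % 2 ^ n) :
    (4 * v u) % (2 ^ (n + 2)) = (4 * v w) % (2 ^ (n + 2)) := by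
  rw [pow_add, mul_comm (2 ^ n)]
  exact Nat.ModEq.mul_left' 4 (compat_C hv n _ _ e)

lemma mod4' {v : ℕ → ℕ} (hv : Paper.NatCompatible v) (n m u w : ℕ) (hm : m ≤ n + 2) (e : u % 2 ^ n = w % 2 ^ n) :
    (4 * v u) % (2 ^ m) = (4 * v w) % (2 ^ m) :=
  Nat.ModEq.of_dvd (pow_dvd_pow 2 hm) (mod4 hv n u w e)

lemma add_case {f v : ℕ → ℕ} (hf : Paper.NatCompatible f) (hv : Paper.NatCompatible v)
    (hfe : Paper.NatErgodic f) : Paper.NatCompatible (fun x => f x + 4 * v x) ∧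
      Paper.NatErgodic (fun x => f x + 4 * v x) := by
  have hg : Paper.NatCompatible (fun x => f x + 4 * v x) := by
    intro r hr u w e
    exact Nat.ModEq.add (hf r hr u w e) (mod4' hv r r u w (by omega) e)
  refine ⟨hg, main hf hg hfe (fun x => by omega) ?_ ?_⟩
  · intro n x e
    have h1 : 4 * v (x + 2 ^ n) ≡ 4 * v x [MOD 2 * 2 ^ n] := by
      rw [← pow_succ']
      exact mod4' hv n (n+1) _ _ (by omega) (by simp)
    have h2 : f (x + 2 ^ n) ≡ f x [MOD 2 * 2 ^ n] := Nat.ModEq.add_right_cancel h1 e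
    refine ne_of_T (by positivity) ?_ ?_ x h2
    · rw [← pow_succ']; exact compat_C hf _
    · rw [← pow_succ']; exact (erg_iff hf).1 hfe _
  · intro n _
    rw [Finset.sum_add_distrib, ← Finset.mul_sum]
    have : 2 * 2 ^ (n + 1) ∣ 4 * ∑ r ∈ Finset.range (2 ^ (n + 1)), v r := by
      have e : 2 * 2 ^ (n + 1) = 4 * 2 ^ n := by ring
      rw [e]
      exact Nat.mul_dvd_mul_left 4 (sum_v hv n)
    exact Nat.ModEq.add_left (b := 0) _ ((Nat.modEq_zero_iff_dvd).2 this)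

lemma xor_case {f v : ℕ → ℕ} (hf : Paper.NatCompatible f) (hv : Paper.NatCompatible v)
    (hfe : Paper.NatErgodic f) : Paper.NatCompatible (fun x => f x ^^^ (4 * v x)) ∧
      Paper.NatErgodic (fun x => f x ^^^ (4 * v x)) := by
  have hg : Paper.NatCompatible (fun x => f x ^^^ (4 * v x)) := by
    intro r hr u w e
    simp only
    rw [Nat.xor_mod_two_pow, Nat.xor_mod_two_pow, hf r hr u w e, mod4' hv r r u w (by omega) e]
  have x2 : ∀ a b : ℕ, (a ^^^ b) % 2 = (a + b) % 2 := by
    intro a b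
    have := @Nat.xor_mod_two_pow a b 1
    rw [pow_one] at this
    rw [this]
    rcases Nat.mod_two_eq_zero_or_one a with ha | ha <;>
      rcases Nat.mod_two_eq_zero_or_one b with hb | hb <;>
      simp [Nat.add_mod, ha, hb]
  refine ⟨hg, main hf hg hfe (fun x => by rw [x2]; omega) ?_ ?_⟩
  · intro n x e
    have h1 : 4 * v (x + 2 ^ n) % 2 ^ (n + 1) = 4 * v x % 2 ^ (n + 1) :=
      mod4' hv n (n+1) _ _ (by omega) (by simp)
    rw [← pow_succ', Nat.xor_mod_two_pow, Nat.xor_mod_two_pow, h1] at e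
    have h2 := Nat.xor_left_injective e
    rw [pow_succ'] at h2
    refine ne_of_T (by positivity) ?_ ?_ x h2
    · rw [← pow_succ']; exact compat_C hf _
    · rw [← pow_succ']; exact (erg_iff hf).1 hfe _
  · intro n ht
    refine sum_of_div (by positivity) (compat_C hf _) (compat_C hg _) ((erg_iff hf).1 hfe _) ht ?_
    have e0 : (∑ r ∈ Finset.range (2 ^ (n + 1)), (4 * v r) / 2 ^ (n + 1)) % 2 = 0 := by
      rw [show Finset.range (2 ^ (n + 1)) = Finset.range (2 * 2 ^ n) by rw [pow_succ']]
      apply sum_even (w := fun r => (4 * v r) / 2 ^ (n + 1))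
      intro x
      have := mod4 hv n (x + 2 ^ n) x (by simp)
      rw [show 2 ^ (n + 2) = 2 ^ (n + 1) * 2 by ring] at this
      rw [← Nat.mod_mul_right_div_self, this, Nat.mod_mul_right_div_self]
    have e1 : (∑ r ∈ Finset.range (2 ^ (n + 1)), (f r ^^^ 4 * v r) / 2 ^ (n + 1)) % 2 =
        (∑ r ∈ Finset.range (2 ^ (n + 1)), (f r / 2 ^ (n + 1) + 4 * v r / 2 ^ (n + 1))) % 2 := by
      rw [Finset.sum_nat_mod, Finset.sum_nat_mod (f := fun r => f r / 2 ^ (n + 1) + 4 * v r / 2 ^ (n + 1))]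
      congr 1
      refine Finset.sum_congr rfl fun r _ => ?_
      rw [Nat.xor_div_two_pow, x2]
    rw [e1, Finset.sum_add_distrib, Nat.add_mod, e0]
    simp

lemma comp_compat {f g : ℕ → ℕ} (hf : Paper.NatCompatible f) (hg : Paper.NatCompatible g) :
    Paper.NatCompatible (fun x => f (g x)) :=
  fun r hr u w e => hf r hr _ _ (hg r hr u w e)

lemma comp_swap {f s : ℕ → ℕ} (hf : Paper.NatCompatible f) (hs : Paper.NatCompatible s)
    (hfe : Paper.NatErgodic f) (h : Paper.NatErgodic (fun x => s (f x))) :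
    Paper.NatErgodic (fun x => f (s x)) := by
  rw [erg_iff (comp_compat hs hf)] at h
  rw [erg_iff (comp_compat hf hs)]
  rw [erg_iff hf] at hfe
  have key : ∀ k x, (fun x => f (s x))^[k] (f x) = f ((fun x => s (f x))^[k] x) := by
    intro k
    induction k with
    | zero => intro x; rfl
    | succ k ih => intro x; rw [Function.iterate_succ_apply, Function.iterate_succ_apply, ih]
  have surj : ∀ n b, ∃ a, f a % 2 ^ n = b % 2 ^ n := by
    intro n b
    obtain ⟨k, hk⟩ := hfe n (f b) b
    exact ⟨f^[k] b, by rw [← hk, ← Function.iterate_succ_apply' f, Function.iterate_succ_apply]⟩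
  intro n a b
  obtain ⟨a', ha⟩ := surj n a
  obtain ⟨b', hb⟩ := surj n b
  obtain ⟨k, hk⟩ := h n a' b'
  refine ⟨k, ?_⟩
  rw [← (compat_C (comp_compat hf hs) n).iter k _ _ ha, key, ← hb]
  exact compat_C hf n _ _ hk

lemma compat_id : Paper.NatCompatible (fun x => x) := fun _ _ _ _ e => e

lemma compat_add {v : ℕ → ℕ} (hv : Paper.NatCompatible v) :
    Paper.NatCompatible (fun x => x + 4 * v x) := by
  intro r hr u w e
  exact Nat.ModEq.add e (mod4' hv r r u w (by omega) e)

lemma compat_xor {v : ℕ → ℕ} (hv : Paper.NatCompatible v) :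
    Paper.NatCompatible (fun x => x ^^^ (4 * v x)) := by
  intro r hr u w e
  simp only
  rw [Nat.xor_mod_two_pow, Nat.xor_mod_two_pow, e, mod4' hv r r u w (by omega) e]

end Erg

/-- if `f, v : ℕ → ℕ` are compatible and `f` is ergodic, then each of
`x ↦ f (x + 4·v x)`, `x ↦ f (x ⊕ 4·v x)`, `x ↦ f x + 4·v x`, `x ↦ f x ⊕ 4·v x`
is compatible and ergodic. -/
theorem statement7 (f v : ℕ → ℕ) (hf : Paper.NatCompatible f) (hv : Paper.NatCompatible v)
    (hfe : Paper.NatErgodic f) :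
    (Paper.NatCompatible (fun x => f (x + 4 * v x)) ∧
      Paper.NatErgodic (fun x => f (x + 4 * v x))) ∧
    (Paper.NatCompatible (fun x => f (x ^^^ (4 * v x))) ∧
      Paper.NatErgodic (fun x => f (x ^^^ (4 * v x)))) ∧
    (Paper.NatCompatible (fun x => f x + 4 * v x) ∧
      Paper.NatErgodic (fun x => f x + 4 * v x)) ∧
    (Paper.NatCompatible (fun x => f x ^^^ (4 * v x)) ∧
      Paper.NatErgodic (fun x => f x ^^^ (4 * v x))) := by
  exact ⟨⟨Erg.comp_compat hf (Erg.compat_add hv),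
      Erg.comp_swap hf (Erg.compat_add hv) hfe (Erg.add_case hf (Erg.comp_compat hv hf) hfe).2⟩,
    ⟨Erg.comp_compat hf (Erg.compat_xor hv),
      Erg.comp_swap hf (Erg.compat_xor hv) hfe (Erg.xor_case hf (Erg.comp_compat hv hf) hfe).2⟩,
    Erg.add_case hf hv hfe, Erg.xor_case hf hv hfe⟩
end

section
/- Let m ≥ 1, let c₀,…,c_{m−1} ∈ ℤ₂, and let g₀,…,g_{m−1} : ℤ₂ → ℤ₂ be compatible maps such that: (i) g_j(x) ≡ x + c_j (mod 2) for all x and all j; (ii) Σ_{j=0}^{m−1} c_j ≡ 1 (mod 2); (iii) the sequence (c_{i mod m} mod 2)_{i≥0} is purely periodic with shortest period length m; (iv) for every k ≥ 1 and every j there is a Boolean function φ_k^j : {0,1}^k → ℤ/2 with δ_k(g_j(z)) = δ_k(z) + φ_k^j(δ₀(z),…,δ_{k−1}(z)) for all z ∈ ℤ₂; (v) for every k ≥ 1, the number of indices j ∈ {0,…,m−1} for which φ_k^j has odd weight is odd. Then for every x₀ ∈ ℤ₂ the sequence x_{i+1} = g_{i mod m}(x_i) is strictly uniformly distributed: for every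 k ≥ 1 the sequence (x_i mod 2^k) is purely periodic with shortest period length 2^k·m and every element of ℤ/2^k occurs exactly m times per period. Moreover: (1) for every s ≥ 0 the sequence (δ_s(x_i))_{i≥0} is purely periodic with period length 2^{s+1}·m; (2) δ_s(x_{i+2^s·m}) ≡ δ_s(x_i) + 1 (mod 2) for all s ≥ 0 and i ≥ 0; (3) for every t ≥ 1 and every r ≥ 0 the sequence (x_{r+i·m} mod 2^t)_{i≥0} is purely periodic, its shortest period has length 2^t, and every element of ℤ/2^t occurs exactly once per period. -/
namespace Paper

lemma val_succ (k : ℕ) (z : ℤ_[2]) :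
    (PadicInt.toZModPow k z).val = (PadicInt.toZModPow (k + 1) z).val % 2 ^ k := by
  rw [← PadicInt.cast_toZModPow k (k + 1) (Nat.le_succ k) z, ZMod.cast_eq_val, ZMod.val_natCast]

lemma digit_eq_iff (k : ℕ) (z w : ℤ_[2]) :
    digit k z = digit k w ↔ (PadicInt.toZModPow (k + 1) z).val / 2 ^ k
      = (PadicInt.toZModPow (k + 1) w).val / 2 ^ k := by
  have h1 : ∀ z : ℤ_[2], (PadicInt.toZModPow (k + 1) z).val / 2 ^ k < 2 := fun z => by
    have := ZMod.val_lt (PadicInt.toZModPow (k + 1) z)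
    rw [Nat.div_lt_iff_lt_mul (by positivity)]
    have h2 : 2 ^ (k + 1) = 2 * 2 ^ k := by ring
    exact lt_of_lt_of_eq this h2
  unfold digit
  rw [ZMod.natCast_eq_natCast_iff']
  simp only [Nat.mod_mod, Nat.mod_eq_of_lt (h1 _)]

lemma toZModPow_succ_iff (k : ℕ) (z w : ℤ_[2]) :
    PadicInt.toZModPow (k + 1) z = PadicInt.toZModPow (k + 1) w ↔
      PadicInt.toZModPow k z = PadicInt.toZModPow k w ∧ digit k z = digit k w := by
  rw [digit_eq_iff, ← (ZMod.val_injective (2 ^ k)).eq_iff,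
    ← (ZMod.val_injective (2 ^ (k + 1))).eq_iff, val_succ k z, val_succ k w]
  constructor
  · intro h
    rw [h]
    exact ⟨rfl, rfl⟩
  · rintro ⟨h1, h2⟩
    rw [← Nat.mod_add_div (PadicInt.toZModPow (k + 1) z).val (2 ^ k), h1, h2, Nat.mod_add_div]

/-- Vector of the first `k` digits. -/
noncomputable def dv (k : ℕ) (z : ℤ_[2]) : Fin k → ZMod 2 := fun r => digit r.val z

lemma dv_eq_iff_forall (k : ℕ) (z w : ℤ_[2]) :
    dv k z = dv k w ↔ ∀ r < k, digit r z = digit r w := by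
  constructor
  · intro h r hr
    exact congrFun h ⟨r, hr⟩
  · intro h
    funext r
    exact h r.val r.isLt

lemma dv_succ_iff (k : ℕ) (z w : ℤ_[2]) :
    dv (k + 1) z = dv (k + 1) w ↔ dv k z = dv k w ∧ digit k z = digit k w := by
  simp only [dv_eq_iff_forall]
  constructor
  · intro h
    exact ⟨fun r hr => h r (by omega), h k (by omega)⟩
  · rintro ⟨h1, h2⟩ r hr
    rcases Nat.lt_succ_iff_lt_or_eq.1 hr with h | rfl
    · exact h1 r h
    · exact h2

lemma dv_iff (k : ℕ) (z w : ℤ_[2]) :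
    dv k z = dv k w ↔ PadicInt.toZModPow k z = PadicInt.toZModPow k w := by
  induction k with
  | zero =>
    have : Subsingleton (ZMod (2 ^ 0)) := by rw [pow_zero]; infer_instance
    exact ⟨fun _ => Subsingleton.elim _ _, fun _ => Subsingleton.elim _ _⟩
  | succ k ih => rw [dv_succ_iff, ih, toZModPow_succ_iff]

lemma digit_zero_hom : ∃ e : ZMod (2 ^ 1) →+* ZMod 2,
    ∀ z : ℤ_[2], digit 0 z = e (PadicInt.toZModPow 1 z) := by
  refine ⟨ZMod.castHom (by norm_num) (ZMod 2), fun z => ?_⟩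
  unfold digit
  rw [ZMod.castHom_apply, ZMod.cast_eq_val]
  simp

lemma sum_range_mul {M : Type*} [AddCommMonoid M] (m N : ℕ) (f : ℕ → M) :
    ∑ i ∈ Finset.range (N * m), f i
      = ∑ r ∈ Finset.range m, ∑ l ∈ Finset.range N, f (r + l * m) := by
  induction N with
  | zero => simp
  | succ N ih =>
    rw [Nat.succ_mul, Finset.sum_range_add, ih, ← Finset.sum_add_distrib]
    refine Finset.sum_congr rfl fun r _ => ?_
    rw [Finset.sum_range_succ, add_comm r]

lemma sum_range_shift {M : Type*} [AddCommGroup M] (m : ℕ) (W : ℕ → M) (i : ℕ) :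
    ∑ r ∈ Finset.range m, W ((i + r) % m) = ∑ r ∈ Finset.range m, W r := by
  induction i with
  | zero =>
    refine Finset.sum_congr rfl fun r hr => ?_
    rw [zero_add, Nat.mod_eq_of_lt (Finset.mem_range.1 hr)]
  | succ i ih =>
    rw [← ih]
    have h1 := Finset.sum_range_succ (fun r => W ((i + r) % m)) m
    have h2 := Finset.sum_range_succ' (fun r => W ((i + r) % m)) m
    simp only [Nat.add_mod_right, add_zero] at h1 h2
    rw [h1] at h2
    rw [add_right_cancel h2]
    refine Finset.sum_congr rfl fun r _ => ?_
    rw [add_assoc, add_comm 1 r]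

lemma sum_eq_card (k : ℕ) (f : (Fin k → ZMod 2) → ZMod 2) :
    ∑ u, f u = (((Finset.univ.filter (fun u : Fin k → ZMod 2 => f u = 1)).card : ℕ) : ZMod 2) := by
  rw [Finset.card_filter]
  push_cast
  refine Finset.sum_congr rfl fun u _ => ?_
  generalize f u = a
  revert a
  decide

section core
variable (m : ℕ) (g : ℕ → ℤ_[2] → ℤ_[2])
  (Ψ : (k : ℕ) → ℕ → (Fin k → ZMod 2) → ZMod 2)
  (x : ℕ → ℤ_[2])

/-- key property -/
def Key (k : ℕ) : Prop := ∀ r i i' : ℕ,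
  dv k (x (r + i * m)) = dv k (x (r + i' * m)) ↔ i ≡ i' [MOD 2 ^ k]

lemma bij_of_key {k : ℕ} (h : Key m x k) (r : ℕ) {M : Type*} [AddCommMonoid M]
    (f : (Fin k → ZMod 2) → M) :
    ∑ l ∈ Finset.range (2 ^ k), f (dv k (x (r + l * m))) = ∑ u, f u := by
  have hinj : Set.InjOn (fun l => dv k (x (r + l * m))) (Finset.range (2 ^ k)) := by
    intro a ha b hb hab
    have := (h r a b).1 hab
    simp only [Finset.coe_range, Set.mem_Iio] at ha hb
    exact Nat.ModEq.eq_of_lt_of_lt this ha hb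
  have himg : (Finset.range (2 ^ k)).image (fun l => dv k (x (r + l * m))) = Finset.univ := by
    apply Finset.eq_univ_of_card
    rw [Finset.card_image_of_injOn hinj]
    simp
  rw [← himg, Finset.sum_image hinj]

lemma flip_of_key (hm : 1 ≤ m)
    (hΨ : ∀ k, ∀ j < m, ∀ z, digit k (g j z) = digit k z + Ψ k j (dv k z))
    (hsum : ∀ k, ∑ j ∈ Finset.range m, ∑ u, Ψ k j u = 1)
    (hx : ∀ i, x (i + 1) = g (i % m) (x i)) {k : ℕ} (h : Key m x k) (i : ℕ) :
    digit k (x (i + 2 ^ k * m)) = digit k (x i) + 1 := by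
  have step : ∀ n, digit k (x (i + n)) = digit k (x i)
      + ∑ j ∈ Finset.range n, Ψ k ((i + j) % m) (dv k (x (i + j))) := by
    intro n
    induction n with
    | zero => simp
    | succ n ih =>
      rw [← add_assoc, hx, hΨ k _ (Nat.mod_lt _ hm), ih, Finset.sum_range_succ, add_assoc]
  rw [step, sum_range_mul]
  congr 1
  rw [← hsum k, ← sum_range_shift m (fun j => ∑ u, Ψ k j u) i]
  refine Finset.sum_congr rfl fun r _ => ?_
  rw [← bij_of_key m x h (i + r)]
  refine Finset.sum_congr rfl fun l _ => ?_
  rw [← add_assoc, Nat.add_mul_mod_self_right]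

lemma key_succ {k : ℕ} (h : Key m x k)
    (hf : ∀ i, digit k (x (i + 2 ^ k * m)) = digit k (x i) + 1) : Key m x (k + 1) := by
  have hq : ∀ q i, digit k (x (i + q * (2 ^ k * m))) = digit k (x i) + q := by
    intro q
    induction q with
    | zero => simp
    | succ q ih =>
      intro i
      rw [Nat.succ_mul, ← add_assoc, hf, ih]
      push_cast
      ring
  have main : ∀ r i i' : ℕ, i ≤ i' →
      (dv (k + 1) (x (r + i * m)) = dv (k + 1) (x (r + i' * m)) ↔ i ≡ i' [MOD 2 ^ (k + 1)]) := by
    intro r i i' hle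
    rw [dv_succ_iff, h r i i', Nat.modEq_iff_dvd' hle, Nat.modEq_iff_dvd' hle]
    have haux : ∀ q, i' - i = 2 ^ k * q →
        digit k (x (r + i' * m)) = digit k (x (r + i * m)) + q := by
      intro q hq'
      rw [← hq]
      have : i' = i + 2 ^ k * q := by omega
      rw [this]
      congr 2
      ring
    constructor
    · rintro ⟨⟨q, hq'⟩, hd⟩
      rw [haux q hq'] at hd
      have h0 : (q : ZMod 2) = 0 := by simpa using hd
      rw [ZMod.natCast_eq_zero_iff] at h0
      rw [hq', pow_succ]
      exact mul_dvd_mul_left _ h0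
    · rintro ⟨q, hq'⟩
      rw [pow_succ, mul_assoc] at hq'
      refine ⟨⟨_, hq'⟩, ?_⟩
      rw [haux _ hq']
      have : ((2 : ℕ) : ZMod 2) = 0 := by decide
      rw [Nat.cast_mul, this]
      simp
  intro r i i'
  rcases le_total i i' with hle | hle
  · exact main r i i' hle
  · rw [eq_comm, main r i' i hle]
    exact ⟨Nat.ModEq.symm, Nat.ModEq.symm⟩

lemma key_all (hm : 1 ≤ m)
    (hΨ : ∀ k, ∀ j < m, ∀ z, digit k (g j z) = digit k z + Ψ k j (dv k z))
    (hsum : ∀ k, ∑ j ∈ Finset.range m, ∑ u, Ψ k j u = 1)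
    (hx : ∀ i, x (i + 1) = g (i % m) (x i)) (k : ℕ) : Key m x k := by
  induction k with
  | zero =>
    intro r i i'
    simp only [pow_zero, Nat.modEq_one, iff_true]
    exact Subsingleton.elim _ _
  | succ k ih => exact key_succ m x ih (flip_of_key m g Ψ x hm hΨ hsum hx ih)

lemma card_one {k : ℕ} (h : Key m x k) (r : ℕ) (a : ZMod (2 ^ k)) :
    ((Finset.range (2 ^ k)).filter
          (fun i => PadicInt.toZModPow k (x (r + i * m)) = a)).card = 1 := by
  have ha : PadicInt.toZModPow k ((a.val : ℕ) : ℤ_[2]) = a := by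
    rw [map_natCast, ZMod.natCast_zmod_val]
  rw [Finset.card_filter]
  have := bij_of_key m x h r (fun u => if u = dv k ((a.val : ℕ) : ℤ_[2]) then 1 else 0)
  rw [Finset.sum_ite_eq'] at this
  simp only [dv_iff, ha, Finset.mem_univ, if_true] at this
  exact this

end core

end Paper

/-- Lemma `le:WP-odd`: given `c 0, …, c (m-1) ∈ ℤ₂` and compatible maps
`g 0, …, g (m-1)` satisfying conditions (i)–(v), the sequence `x (i+1) = g (i % m) (x i)`
is strictly uniformly distributed; moreover (1) each coordinate sequence `δ_s (x i)` is
purely periodic with period length `2^(s+1)·m`, (2) the second half of the period is the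
negation of the first half, and (3) each subsequence `x (r + i·m) mod 2^t` is purely
periodic with shortest period length `2^t`, each residue occurring exactly once per
period. -/
theorem statement9 (m : ℕ) (hm : 1 ≤ m) (c : ℕ → ℤ_[2]) (g : ℕ → ℤ_[2] → ℤ_[2])
    (hgc : ∀ j < m, Paper.Compatible 2 (g j))
    -- (i) `g j x ≡ x + c j (mod 2)`
    (hi : ∀ j < m, ∀ x : ℤ_[2],
      PadicInt.toZModPow 1 (g j x) = PadicInt.toZModPow 1 (x + c j))
    -- (ii) `∑ j < m, c j ≡ 1 (mod 2)`
    (hii : PadicInt.toZModPow 1 (∑ j ∈ Finset.range m, c j) = 1)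
    -- (iii) the sequence `(c (i % m) mod 2)` is purely periodic with shortest period `m`
    (hiii : Paper.ShortestPeriod (fun i => PadicInt.toZModPow 1 (c (i % m))) m)
    -- (iv) `δ_k (g j z) = δ_k z + φ k j (δ₀ z, …, δ_{k-1} z)`
    (φ : (k : ℕ) → ℕ → (Fin k → ZMod 2) → ZMod 2)
    (hiv : ∀ k : ℕ, 1 ≤ k → ∀ j < m, ∀ z : ℤ_[2],
      Paper.digit k (g j z) = Paper.digit k z + φ k j (fun r => Paper.digit r.val z))
    -- (v) for every `k ≥ 1` an odd number of the `φ k j`, `j < m`, have odd weight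
    (hv : ∀ k : ℕ, 1 ≤ k →
      Odd (((Finset.range m).filter (fun j =>
        ((Finset.univ.filter (fun u : Fin k → ZMod 2 => φ k j u = 1)).card) % 2 = 1)).card))
    (x : ℕ → ℤ_[2]) (hx : ∀ i, x (i + 1) = g (i % m) (x i)) :
    (∀ k : ℕ, 1 ≤ k →
      Paper.ShortestPeriod (fun i => PadicInt.toZModPow k (x i)) (2 ^ k * m) ∧
      ∀ a : ZMod (2 ^ k),
        ((Finset.range (2 ^ k * m)).filter
          (fun i => PadicInt.toZModPow k (x i) = a)).card = m) ∧
    (∀ s : ℕ, Paper.PurePeriodic (fun i => Paper.digit s (x i)) (2 ^ (s + 1) * m)) ∧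
    (∀ s i : ℕ, Paper.digit s (x (i + 2 ^ s * m)) = Paper.digit s (x i) + 1) ∧
    (∀ t : ℕ, 1 ≤ t → ∀ r : ℕ,
      Paper.ShortestPeriod (fun i => PadicInt.toZModPow t (x (r + i * m))) (2 ^ t) ∧
      ∀ a : ZMod (2 ^ t),
        ((Finset.range (2 ^ t)).filter
          (fun i => PadicInt.toZModPow t (x (r + i * m)) = a)).card = 1) := by
  classical
  obtain ⟨e, he⟩ := Paper.digit_zero_hom
  obtain ⟨Ψ, hΨ0, hΨ1⟩ : ∃ Ψ : (k : ℕ) → ℕ → (Fin k → ZMod 2) → ZMod 2,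
      (∀ j u, Ψ 0 j u = e (PadicInt.toZModPow 1 (c j))) ∧ ∀ k j u, Ψ (k + 1) j u = φ (k + 1) j u :=
    ⟨fun k => match k with
      | 0 => fun j _ => e (PadicInt.toZModPow 1 (c j))
      | k + 1 => φ (k + 1), fun _ _ => rfl, fun _ _ _ => rfl⟩
  have hΨ : ∀ k, ∀ j < m, ∀ z,
      Paper.digit k (g j z) = Paper.digit k z + Ψ k j (Paper.dv k z) := by
    intro k j hj z
    cases k with
    | zero => rw [hΨ0, he, he, hi j hj, map_add, map_add]
    | succ k => rw [hΨ1, hiv (k + 1) (by omega) j hj]; rfl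
  have hsum : ∀ k, ∑ j ∈ Finset.range m, ∑ u, Ψ k j u = 1 := by
    intro k
    cases k with
    | zero =>
      have := congrArg e hii
      simp only [map_sum, map_one] at this
      rw [← this]
      refine Finset.sum_congr rfl fun j _ => ?_
      simp [hΨ0]
    | succ k =>
      have h1 := hv (k + 1) (by omega)
      rw [← ZMod.natCast_eq_one_iff_odd, Finset.card_filter] at h1
      rw [← h1]
      push_cast
      refine Finset.sum_congr rfl fun j _ => ?_
      simp only [hΨ1]
      rw [Paper.sum_eq_card]
      split_ifs with h
      · rw [ZMod.natCast_eq_one_iff_odd, Nat.odd_iff]; exact h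
      · rw [ZMod.natCast_eq_zero_iff_even, Nat.even_iff]; omega
  have key := Paper.key_all m g Ψ x hm hΨ hsum hx
  have hflip : ∀ s i, _ := fun s i => Paper.flip_of_key m g Ψ x hm hΨ hsum hx (key s) i
  have keyZ : ∀ k r i i', PadicInt.toZModPow k (x (r + i * m))
      = PadicInt.toZModPow k (x (r + i' * m)) ↔ i ≡ i' [MOD 2 ^ k] := by
    intro k r i i'
    rw [← Paper.dv_iff]
    exact key k r i i'
  have hper : ∀ k i, PadicInt.toZModPow k (x (i + 2 ^ k * m)) = PadicInt.toZModPow k (x i) := by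
    intro k i
    have := (keyZ k i (2 ^ k) 0).2 (by simp [Nat.ModEq])
    simpa using this
  refine ⟨fun k hk => ⟨⟨?_, hper k, ?_⟩, ?_⟩, ?_, hflip, fun t ht r =>
    ⟨⟨Nat.one_le_two_pow, ?_, ?_⟩, fun a => Paper.card_one m x (key t) r a⟩⟩
  · exact Nat.mul_pos (by positivity) hm
  · intro T hT hTp
    have hc : ∀ i, PadicInt.toZModPow 1 (c ((i + T) % m)) = PadicInt.toZModPow 1 (c (i % m)) := by
      have hd : ∀ i, PadicInt.toZModPow 1 (x (i + T)) = PadicInt.toZModPow 1 (x i) := by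
        intro i
        have h1 := hTp i
        rw [← PadicInt.cast_toZModPow 1 k hk, ← PadicInt.cast_toZModPow 1 k hk]
        exact congrArg _ h1
      have hcx : ∀ i, PadicInt.toZModPow 1 (c (i % m))
          = PadicInt.toZModPow 1 (x (i + 1)) - PadicInt.toZModPow 1 (x i) := by
        intro i
        rw [hx, hi _ (Nat.mod_lt _ hm), map_add]
        ring
      intro i
      rw [hcx, hcx, hd, show i + T + 1 = (i + 1) + T by ring, hd]
    have hdvd : m ∣ T := by
      by_contra hnd
      have hpos : 1 ≤ T % m := Nat.pos_of_ne_zero fun h => hnd (Nat.dvd_of_mod_eq_zero h)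
      have := hiii.2.2 (T % m) hpos (fun i => by
        show PadicInt.toZModPow 1 (c ((i + T % m) % m)) = PadicInt.toZModPow 1 (c (i % m))
        rw [Nat.add_mod_mod]
        exact hc i)
      have := Nat.mod_lt T hm
      omega
    obtain ⟨q, rfl⟩ := hdvd
    have h1 := hTp 0
    have h2 := (keyZ k 0 q 0).1 (by simpa [mul_comm] using h1)
    have h3 := (Nat.modEq_zero_iff_dvd).1 h2
    rw [mul_comm m q]
    exact Nat.mul_le_mul_right m (Nat.le_of_dvd (Nat.pos_of_mul_pos_left hT) h3)
  · intro a
    rw [Finset.card_filter, Paper.sum_range_mul]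
    rw [Finset.sum_congr rfl fun r _ => (by
      rw [← Finset.card_filter]; exact Paper.card_one m x (key k) r a :
        ∑ l ∈ Finset.range (2 ^ k),
          (if PadicInt.toZModPow k (x (r + l * m)) = a then 1 else 0) = 1)]
    simp
  · intro s i
    exact ((Paper.toZModPow_succ_iff s _ _).1 (hper (s + 1) i)).2
  · intro i
    exact (keyZ t r _ _).2 (by simp [Nat.ModEq])
  · intro T hT hTp
    have h1 := hTp 0
    have h2 := (keyZ t r T 0).1 (by simpa using h1)
    exact Nat.le_of_dvd hT ((Nat.modEq_zero_iff_dvd).1 h2)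
end

section
/- Let m > 1 be odd, and let C₀,…,C_{m−1} be natural numbers with δ₀(C_j) = 1 and δ₂(C_j) = 1 for all j. Let c₀,…,c_{m−1} be natural numbers such that Σ_{j=0}^{m−1} c_j ≡ 0 (mod 2) and the sequence (c_{i mod m} mod 2)_{i≥0} is purely periodic with shortest period length m. Then for every x₀ ∈ ℕ the sequence defined by x_{i+1} = x_i + c_{i mod m} + (x_i² OR C_{i mod m}) satisfies: for every k ≥ 1, the sequence (x_i mod 2^k)_{i≥0} is purely periodic, its shortest period has length 2^k·m, and every element of ℤ/2^k occurs exactly m times among x₀ mod 2^k, …, x_{2^k·m−1} mod 2^k. -/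
namespace S19

lemma sum_range_mul' (f : ℕ → ℕ) (m n : ℕ) :
    ∑ s ∈ Finset.range (n * m), f s
      = ∑ j ∈ Finset.range m, ∑ t ∈ Finset.range n, f (j + m * t) := by
  rw [Finset.sum_comm]
  induction n with
  | zero => simp
  | succ n ih =>
    rw [Nat.succ_mul, Finset.sum_range_add, ih, Finset.sum_range_succ]
    congr 1
    apply Finset.sum_congr rfl
    intro j _
    congr 1
    ring

lemma sum_shift (f : ℕ → ℕ) (m : ℕ) (i : ℕ) :
    ∑ j ∈ Finset.range m, f ((i + j) % m) = ∑ j ∈ Finset.range m, f j := by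
  induction i with
  | zero =>
    apply Finset.sum_congr rfl
    intro j hj
    rw [Nat.zero_add, Nat.mod_eq_of_lt (Finset.mem_range.1 hj)]
  | succ i ih =>
    rw [← ih]
    have h1 := Finset.sum_range_succ (fun j => f ((i + j) % m)) m
    have h2 := Finset.sum_range_succ' (fun j => f ((i + j) % m)) m
    have h3 : ∀ j, (i + 1 + j) = i + (j + 1) := by intro j; ring
    simp only [h3]
    simp only [Nat.add_mod_right, Nat.add_zero] at h1 h2
    omega

lemma h_congr (C : ℕ) (hC : C % 2 = 1) (k a b : ℕ) (hab : a ≡ b [MOD 2 ^ k]) :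
    (a ^ 2 ||| C) ≡ (b ^ 2 ||| C) [MOD 2 ^ (k + 1)] := by
  rcases Nat.eq_zero_or_pos k with rfl | hk
  · have : ∀ n : ℕ, (n ||| C) % 2 ^ 1 = 1 := by
      intro n
      rw [Nat.or_mod_two_pow]
      have : n % 2 < 2 := Nat.mod_lt _ (by norm_num)
      rw [pow_one, hC]
      interval_cases n % 2 <;> rfl
    unfold Nat.ModEq
    rw [Nat.zero_add, this, this]
  · have h : a ^ 2 ≡ b ^ 2 [MOD 2 ^ (k + 1)] := by
      rw [Nat.modEq_iff_dvd] at hab ⊢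
      obtain ⟨d, hd⟩ := hab
      obtain ⟨l, rfl⟩ : ∃ l, k = l + 1 := ⟨k - 1, by omega⟩
      push_cast at hd ⊢
      refine ⟨d * (a + 2 ^ l * d), ?_⟩
      have : (b : ℤ) = a + 2 ^ (l + 1) * d := by linarith
      rw [this]; ring
    unfold Nat.ModEq at *
    rw [Nat.or_mod_two_pow, h, ← Nat.or_mod_two_pow]

lemma bit_or (a c b : ℕ) (hc : (c / 2 ^ b) % 2 = 0) :
    ((a ||| c) / 2 ^ b) % 2 = (a / 2 ^ b) % 2 := by
  have := Nat.testBit_or a c b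
  have h2 : c.testBit b = false := by
    rw [Nat.testBit_eq_decide_div_mod_eq]; simp [hc]
  rw [h2, Bool.or_false] at this
  rw [← Nat.toNat_testBit, this, Nat.toNat_testBit]

lemma bit_or1 (a c b : ℕ) (hc : (c / 2 ^ b) % 2 = 1) :
    ((a ||| c) / 2 ^ b) % 2 = 1 := by
  have := Nat.testBit_or a c b
  have h2 : c.testBit b = true := by
    rw [Nat.testBit_eq_decide_div_mod_eq]; simp [hc]
  rw [h2, Bool.or_true] at this
  rw [← Nat.toNat_testBit, this]; rfl

lemma sq_bit_even (e : ℕ) :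
    2 ∣ ∑ z ∈ Finset.range (2 ^ (e + 3)), (z ^ 2 / 2 ^ (e + 3)) % 2 := by
  rw [show 2 ^ (e + 3) = 2 ^ (e + 2) + 2 ^ (e + 2) by ring, Finset.sum_range_add,
    ← Finset.sum_add_distrib]
  rw [show 2 ^ (e + 2) + 2 ^ (e + 2) = 2 ^ (e + 3) by ring]
  have : ∀ z, (2 ^ (e + 2) + z) ^ 2 / 2 ^ (e + 3) = z ^ 2 / 2 ^ (e + 3) + (z + 2 ^ (e + 1)) := by
    intro z
    rw [← Nat.add_mul_div_left _ _ (by positivity : 0 < 2 ^ (e + 3))]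
    congr 1; ring
  simp only [this]
  have h2 : ∀ z, (z ^ 2 / 2 ^ (e + 3) % 2 + (z ^ 2 / 2 ^ (e + 3) + (z + 2 ^ (e + 1))) % 2)
     ≡ z [MOD 2] := by
    intro z
    have : 2 ^ (e + 1) = 2 * 2 ^ e := by ring
    unfold Nat.ModEq; omega
  have h3 : (∑ z ∈ Finset.range (2 ^ (e + 2)), (z ^ 2 / 2 ^ (e + 3) % 2 + (z ^ 2 / 2 ^ (e + 3) + (z + 2 ^ (e + 1))) % 2)) ≡ ∑ z ∈ Finset.range (2 ^ (e + 2)), z [MOD 2] := by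
    unfold Nat.ModEq
    rw [Finset.sum_nat_mod, Finset.sum_nat_mod _ _ (fun z => z)]
    congr 1
    exact Finset.sum_congr rfl (fun z _ => h2 z)
  rw [(h3.dvd_iff (dvd_refl 2)), Finset.sum_range_id]
  rw [show 2 ^ (e + 2) * (2 ^ (e + 2) - 1) = 2 * (2 * (2 ^ e * (2 ^ (e + 2) - 1))) by ring]
  rw [Nat.mul_div_cancel_left _ (by norm_num)]
  exact dvd_mul_right _ _

lemma modEq_sum {ι : Type*} (s : Finset ι) (f g : ι → ℕ) (n : ℕ)
    (h : ∀ i ∈ s, f i ≡ g i [MOD n]) : ∑ i ∈ s, f i ≡ ∑ i ∈ s, g i [MOD n] := by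
  unfold Nat.ModEq
  rw [Finset.sum_nat_mod, Finset.sum_nat_mod _ _ g]
  congr 1
  exact Finset.sum_congr rfl h

lemma bit_even (C : ℕ) (h2 : C / 4 % 2 = 1) (b : ℕ) (hb : 2 ≤ b) :
    2 ∣ ∑ z ∈ Finset.range (2 ^ b), ((z ^ 2 ||| C) / 2 ^ b) % 2 := by
  rcases Nat.mod_two_eq_zero_or_one (C / 2 ^ b) with h | h
  · simp only [bit_or _ _ _ h]
    obtain ⟨e, rfl⟩ : ∃ e, b = e + 3 := by
      refine ⟨b - 3, ?_⟩
      have : b ≠ 2 := by rintro rfl; norm_num at h; omega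
      omega
    exact sq_bit_even e
  · simp only [bit_or1 _ _ _ h]
    simp
    omega

lemma sum_h (C : ℕ) (hC : C % 2 = 1) (h2 : C / 4 % 2 = 1) (k : ℕ) :
    ∑ z ∈ Finset.range (2 ^ k), (z ^ 2 ||| C) ≡ 2 ^ k [MOD 2 ^ (k + 1)] := by
  rcases Nat.eq_zero_or_pos k with rfl | hk
  · simp [Nat.ModEq, hC]
  induction k, hk using Nat.le_induction with
  | base =>
    have h := bit_or1 1 C 0 (by simpa using hC)
    have h3 : (1 ||| C) / 2 = C / 2 := by
      have := Nat.or_div_two (a := 1) (b := C)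
      simpa using this
    simp only [pow_zero, Nat.div_one] at h
    simp [Finset.sum_range_succ, Nat.ModEq]
    omega
  | succ k hk ih =>
    have e1 : ∑ z ∈ Finset.range (2 ^ (k + 1)), (z ^ 2 ||| C) ≡
        ∑ z ∈ Finset.range (2 ^ (k + 1)), ((z ^ 2 ||| C) % 2 ^ (k + 1)
          + 2 ^ (k + 1) * ((z ^ 2 ||| C) / 2 ^ (k + 1) % 2)) [MOD 2 ^ (k + 1 + 1)] := by
      apply modEq_sum
      intro z _
      rw [← Nat.mod_pow_succ]
      exact (Nat.mod_modEq _ _).symm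
    refine e1.trans ?_
    rw [Finset.sum_add_distrib, ← Finset.mul_sum]
    obtain ⟨N, hN⟩ := bit_even C h2 (k + 1) (by omega)
    rw [hN]
    have e2 : ∑ z ∈ Finset.range (2 ^ (k + 1)), (z ^ 2 ||| C) % 2 ^ (k + 1)
        = 2 * ∑ z ∈ Finset.range (2 ^ k), (z ^ 2 ||| C) % 2 ^ (k + 1) := by
      rw [show 2 ^ (k + 1) = 2 ^ k + 2 ^ k by ring, Finset.sum_range_add, two_mul,
        show 2 ^ k + 2 ^ k = 2 ^ (k + 1) by ring]
      congr 1
      apply Finset.sum_congr rfl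
      intro z _
      apply h_congr C hC k
      simp [Nat.ModEq]
    rw [e2]
    have e3 : ∑ z ∈ Finset.range (2 ^ k), (z ^ 2 ||| C) % 2 ^ (k + 1) ≡ 2 ^ k [MOD 2 ^ (k + 1)] :=
      (modEq_sum _ _ _ _ (fun z _ => Nat.mod_modEq _ _)).trans ih
    have e4 := Nat.ModEq.mul_left' 2 e3
    rw [show 2 * 2 ^ (k + 1) = 2 ^ (k + 1 + 1) by ring, show 2 * 2 ^ k = 2 ^ (k + 1) by ring] at e4
    have e5 := e4.add (show 2 ^ (k + 1) * (2 * N) ≡ 0 [MOD 2 ^ (k + 1 + 1)] from by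
      rw [Nat.modEq_zero_iff_dvd]; exact ⟨N, by ring⟩)
    simpa using e5

/-- injectivity along residue classes -/
def E (m : ℕ) (x : ℕ → ℕ) (k : ℕ) : Prop :=
  ∀ j, ∀ t < 2 ^ k, ∀ t' < 2 ^ k, x (j + m * t) ≡ x (j + m * t') [MOD 2 ^ k] → t = t'

lemma image_eq (m : ℕ) (x : ℕ → ℕ) (k : ℕ) (hE : E m x k) (j : ℕ) :
    (Finset.range (2 ^ k)).image (fun t => x (j + m * t) % 2 ^ k) = Finset.range (2 ^ k) := by
  apply Finset.eq_of_subset_of_card_le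
  · intro a ha
    simp only [Finset.mem_image, Finset.mem_range] at ha ⊢
    obtain ⟨t, _, rfl⟩ := ha
    exact Nat.mod_lt _ (by positivity)
  · rw [Finset.card_image_of_injOn]
    intro t ht t' ht' h
    simp at ht ht'
    exact hE j t ht t' ht' h

lemma x_add (m : ℕ) (C c x : ℕ → ℕ)
    (hx : ∀ i, x (i + 1) = x i + c (i % m) + (x i ^ 2 ||| C (i % m)))
    (i n : ℕ) : x (i + n) = x i +
    ∑ s ∈ Finset.range n, (c ((i + s) % m) + (x (i + s) ^ 2 ||| C ((i + s) % m))) := by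
  induction n with
  | zero => simp
  | succ n ih =>
    rw [Finset.sum_range_succ, ← Nat.add_assoc i n 1, hx, ih]; ring

lemma D_of_E (m : ℕ) (hm : 1 < m) (hmodd : Odd m)
    (C : ℕ → ℕ) (hC : ∀ j < m, C j % 2 = 1 ∧ (C j / 4) % 2 = 1)
    (c : ℕ → ℕ) (hsum : (∑ j ∈ Finset.range m, c j) % 2 = 0) (x : ℕ → ℕ)
    (hx : ∀ i, x (i + 1) = x i + c (i % m) + (x i ^ 2 ||| C (i % m)))
    (k : ℕ) (hE : E m x k) (i : ℕ) :
    x (i + 2 ^ k * m) ≡ x i + 2 ^ k [MOD 2 ^ (k + 1)] := by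
  rw [x_add m C c x hx, sum_range_mul']
  apply Nat.ModEq.add_left
  have h1 : ∀ j ∈ Finset.range m, (∑ t ∈ Finset.range (2 ^ k), (c ((i + (j + m * t)) % m) +
      (x (i + (j + m * t)) ^ 2 ||| C ((i + (j + m * t)) % m)))) ≡
      2 ^ k * (c ((i + j) % m) + 1) [MOD 2 ^ (k + 1)] := by
    intro j _
    have h2 : ∀ t, (i + (j + m * t)) % m = (i + j) % m := by
      intro t; rw [← Nat.add_assoc, Nat.add_mul_mod_self_left]
    simp only [h2]
    rw [Finset.sum_add_distrib, mul_add]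
    obtain ⟨hc1, hc2⟩ := hC ((i + j) % m) (Nat.mod_lt _ (by omega))
    apply Nat.ModEq.add
    · simp [Nat.ModEq.refl]
    · rw [mul_one]
      refine Nat.ModEq.trans ?_ (sum_h _ hc1 hc2 k)
      have e := congrArg (fun s => ∑ z ∈ s, (z ^ 2 ||| C ((i + j) % m)))
        (image_eq m x k hE (i + j))
      rw [← e, Finset.sum_image]
      · apply modEq_sum
        intro t _
        apply h_congr _ hc1
        rw [← Nat.add_assoc]
        exact (Nat.mod_modEq _ _).symm
      · intro t ht t' ht' h
        simp at ht ht'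
        exact hE _ t ht t' ht' h
  refine (modEq_sum _ _ _ _ h1).trans ?_
  rw [← Finset.mul_sum, Finset.sum_add_distrib, sum_shift c]
  have : (∑ j ∈ Finset.range m, c j + ∑ j ∈ Finset.range m, 1) ≡ 1 [MOD 2] := by
    simp only [Finset.sum_const, Finset.card_range, smul_eq_mul, mul_one]
    obtain ⟨r, hr⟩ := hmodd
    unfold Nat.ModEq
    omega
  have := Nat.ModEq.mul_left' (2 ^ k) this
  rwa [← pow_succ, mul_one] at this

lemma per (m : ℕ) (hm : 1 < m) (hmodd : Odd m)
    (C : ℕ → ℕ) (hC : ∀ j < m, C j % 2 = 1 ∧ (C j / 4) % 2 = 1)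
    (c : ℕ → ℕ) (hsum : (∑ j ∈ Finset.range m, c j) % 2 = 0) (x : ℕ → ℕ)
    (hx : ∀ i, x (i + 1) = x i + c (i % m) + (x i ^ 2 ||| C (i % m)))
    (k : ℕ) (hE : E m x k) (i q : ℕ) :
    x (i + m * (2 ^ k * q)) ≡ x i [MOD 2 ^ k] := by
  induction q with
  | zero => simp [Nat.ModEq.refl]
  | succ q ih =>
    have := (D_of_E m hm hmodd C hC c hsum x hx k hE (i + m * (2 ^ k * q))).of_dvd
      (pow_dvd_pow 2 (Nat.le_succ k))
    rw [show i + m * (2 ^ k * (q + 1)) = i + m * (2 ^ k * q) + 2 ^ k * m by ring]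
    refine this.trans ?_
    refine (ih.add_right _).trans ?_
    simp [Nat.ModEq]

lemma per_mod (m : ℕ) (hm : 1 < m) (hmodd : Odd m)
    (C : ℕ → ℕ) (hC : ∀ j < m, C j % 2 = 1 ∧ (C j / 4) % 2 = 1)
    (c : ℕ → ℕ) (hsum : (∑ j ∈ Finset.range m, c j) % 2 = 0) (x : ℕ → ℕ)
    (hx : ∀ i, x (i + 1) = x i + c (i % m) + (x i ^ 2 ||| C (i % m)))
    (k : ℕ) (hE : E m x k) (i t : ℕ) :
    x (i + m * t) ≡ x (i + m * (t % 2 ^ k)) [MOD 2 ^ k] := by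
  have := per m hm hmodd C hC c hsum x hx k hE (i + m * (t % 2 ^ k)) (t / 2 ^ k)
  rwa [Nat.add_assoc, ← Nat.mul_add, Nat.mod_add_div] at this

lemma E_all (m : ℕ) (hm : 1 < m) (hmodd : Odd m)
    (C : ℕ → ℕ) (hC : ∀ j < m, C j % 2 = 1 ∧ (C j / 4) % 2 = 1)
    (c : ℕ → ℕ) (hsum : (∑ j ∈ Finset.range m, c j) % 2 = 0) (x : ℕ → ℕ)
    (hx : ∀ i, x (i + 1) = x i + c (i % m) + (x i ^ 2 ||| C (i % m)))
    (k : ℕ) : E m x k := by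
  induction k with
  | zero =>
    intro j t ht t' ht' _
    simp at ht ht'; omega
  | succ k ih =>
    have key : ∀ j t t', t < t' → t' < 2 ^ (k + 1) →
        ¬ x (j + m * t) ≡ x (j + m * t') [MOD 2 ^ (k + 1)] := by
      intro j t t' h1 h2 h
      have h3 := h.of_dvd (pow_dvd_pow 2 (Nat.le_succ k))
      have p := per_mod m hm hmodd C hC c hsum x hx k ih j
      have pos : 0 < 2 ^ k := by positivity
      have h4 := ih j (t % 2 ^ k) (Nat.mod_lt _ pos) (t' % 2 ^ k) (Nat.mod_lt _ pos)
        ((p t).symm.trans (h3.trans (p t')))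
      have h5 : t' = t + 2 ^ k := by
        have a1 := Nat.mod_add_div t (2 ^ k)
        have a2 := Nat.mod_add_div t' (2 ^ k)
        have a3 : t' / 2 ^ k < 2 := by
          rw [Nat.div_lt_iff_lt_mul pos]; rw [pow_succ] at h2; omega
        have a4 : t / 2 ^ k < 2 := by
          rw [Nat.div_lt_iff_lt_mul pos]; rw [pow_succ] at h2; omega
        interval_cases h6 : t' / 2 ^ k <;> interval_cases h7 : t / 2 ^ k <;> omega
      have d := D_of_E m hm hmodd C hC c hsum x hx k ih (j + m * t)
      rw [show j + m * t + 2 ^ k * m = j + m * t' by rw [h5]; ring] at d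
      have d2 := (h.trans d).symm
      have d3 : 2 ^ k ≡ 0 [MOD 2 ^ (k + 1)] :=
        Nat.ModEq.add_left_cancel' (x (j + m * t)) (by simpa using d2)
      rw [Nat.modEq_zero_iff_dvd] at d3
      have := Nat.le_of_dvd pos d3
      rw [pow_succ] at this
      omega
    intro j t ht t' ht' h
    rcases lt_trichotomy t t' with h1 | h1 | h1
    · exact absurd h (key j t t' h1 ht')
    · exact h1
    · exact absurd h.symm (key j t' t h1 ht)

end S19

/-- for odd `m > 1`, constants `C j` with `δ₀(C j) = δ₂(C j) = 1`, and a
control sequence `c j` of even sum whose residues mod 2 have shortest period `m`, the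
sequence `x (i+1) = x i + c (i % m) + (x i ² OR C (i % m))` is, modulo every `2^k`,
purely periodic with shortest period length `2^k·m`, every residue occurring exactly `m`
times per period. -/
theorem statement19 (m : ℕ) (hm : 1 < m) (hmodd : Odd m)
    (C : ℕ → ℕ) (hC : ∀ j < m, C j % 2 = 1 ∧ (C j / 4) % 2 = 1)
    (c : ℕ → ℕ)
    (hsum : (∑ j ∈ Finset.range m, c j) % 2 = 0)
    (hcper : Paper.ShortestPeriod (fun i => c (i % m) % 2) m)
    (x : ℕ → ℕ)
    (hx : ∀ i, x (i + 1) = x i + c (i % m) + (x i ^ 2 ||| C (i % m))) :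
    ∀ k : ℕ, 1 ≤ k →
      Paper.ShortestPeriod (fun i => (x i : ZMod (2 ^ k))) (2 ^ k * m) ∧
      ∀ a : ZMod (2 ^ k),
        ((Finset.range (2 ^ k * m)).filter (fun i => (x i : ZMod (2 ^ k)) = a)).card = m := by
  intro k hk
  have hE := S19.E_all m hm hmodd C hC c hsum x hx k
  have pos : 0 < 2 ^ k := by positivity
  refine ⟨⟨Nat.mul_pos pos (by omega), ?_, ?_⟩, ?_⟩
  · intro i
    have := S19.per m hm hmodd C hC c hsum x hx k hE i 1
    rw [mul_one, mul_comm m] at this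
    exact (ZMod.natCast_eq_natCast_iff _ _ _).2 this
  · intro t' ht' hper
    have hp : ∀ i, x (i + t') ≡ x i [MOD 2 ^ k] :=
      fun i => (ZMod.natCast_eq_natCast_iff _ _ _).1 (hper i)
    have hp2 : ∀ i, x (i + t') % 2 = x i % 2 := fun i =>
      (hp i).of_dvd (dvd_pow_self 2 (by omega))
    have hx2 : ∀ i, x (i + 1) % 2 = (x i + c (i % m) + 1) % 2 := by
      intro i
      have h1 := (hC (i % m) (Nat.mod_lt _ (by omega))).1
      have h2 := S19.bit_or1 (x i ^ 2) (C (i % m)) 0 (by simpa using h1)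
      rw [hx]
      simp only [pow_zero, Nat.div_one] at h2
      omega
    have hcp : ∀ i, c ((i + t') % m) % 2 = c (i % m) % 2 := by
      intro i
      have a1 := hx2 i
      have a2 := hx2 (i + t')
      have a3 := hp2 i
      have a4 := hp2 (i + 1)
      rw [show i + 1 + t' = i + t' + 1 by ring] at a4
      omega
    have hdvd : m ∣ t' := by
      rw [Nat.dvd_iff_mod_eq_zero]
      by_contra hne
      have := hcper.2.2 (t' % m) (by omega) (by
        intro i
        have := hcp i
        simpa using this)
      have := Nat.mod_lt t' (show m > 0 by omega)
      omega
    obtain ⟨q, rfl⟩ := hdvd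
    have h1 := S19.per_mod m hm hmodd C hC c hsum x hx k hE 0 q
    have h2 := hp 0
    have h3 := hE 0 (q % 2 ^ k) (Nat.mod_lt _ pos) 0 pos (h1.symm.trans (by simpa using h2))
    have h4 : 2 ^ k ∣ q := Nat.dvd_of_mod_eq_zero h3
    have h5 : 0 < q := Nat.pos_of_mul_pos_left (by omega : 0 < m * q)
    rw [mul_comm]
    exact Nat.mul_le_mul_left _ (Nat.le_of_dvd h5 h4)
  · intro a
    have : NeZero (2 ^ k) := ⟨pos.ne'⟩
    rw [Finset.card_filter, S19.sum_range_mul']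
    have : ∀ j ∈ Finset.range m, (∑ t ∈ Finset.range (2 ^ k),
        if (x (j + m * t) : ZMod (2 ^ k)) = a then 1 else 0) = 1 := by
      intro j _
      have him := S19.image_eq m x k hE j
      have hmem : a.val ∈ Finset.range (2 ^ k) := Finset.mem_range.2 (ZMod.val_lt a)
      rw [← him, Finset.mem_image] at hmem
      obtain ⟨t0, ht0, hv⟩ := hmem
      have hxa : (x (j + m * t0) : ZMod (2 ^ k)) = a := by
        rw [← ZMod.natCast_mod, hv, ZMod.natCast_zmod_val]
      rw [Finset.sum_eq_single_of_mem t0 ht0, if_pos hxa]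
      intro t ht hne
      rw [if_neg]
      intro h
      exact hne (hE j t (Finset.mem_range.1 ht) t0 (Finset.mem_range.1 ht0)
        ((ZMod.natCast_eq_natCast_iff _ _ _).1 (h.trans hxa.symm)))
    rw [Finset.sum_congr rfl this]
    simp
end
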